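/- Every rational cone in P³ (an irreducible reduced cone over a rational plane curve) is Cremona equivalent to a plane. -/

import Mathlib

/-!
Concrete framework: projective space over a field `k` as `Projectivization`,
hypersurfaces as zero loci of homogeneous polynomials, rational maps given by
tuples of homogeneous polynomials, birational maps between (closed) subvarieties,
and Cremona equivalence of divisors.
-/

open MvPolynomial

/-- Projective `n`-space over `k`, as the projectivization of `k^{n+1}`. -/
abbrev ProjSp (k : Type) [Field k] (n : ℕ) : Type :=
  Projectivization k (Fin (n + 1) → k)

namespace ProjSp

variable (k : Type) [Field k]

/-- The zero locus in `ℙⁿ` of a (homogeneous) polynomial. -/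
def zeros {n : ℕ} (f : MvPolynomial (Fin (n + 1)) k) : Set (ProjSp k n) :=
  {x | eval x.rep f = 0}

/-- `D ⊆ ℙⁿ` is an irreducible and reduced divisor (hypersurface): it is the zero
locus of an irreducible homogeneous polynomial of positive degree. -/
def IsIrredDivisor {n : ℕ} (D : Set (ProjSp k n)) : Prop :=
  ∃ (d : ℕ) (f : MvPolynomial (Fin (n + 1)) k),
    0 < d ∧ f.IsHomogeneous d ∧ Irreducible f ∧ D = zeros k f

/-- A hyperplane in `ℙⁿ`: the zero locus of a nonzero linear form. -/
def IsHyperplane {n : ℕ} (H : Set (ProjSp k n)) : Prop :=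
  ∃ f : MvPolynomial (Fin (n + 1)) k, f ≠ 0 ∧ f.IsHomogeneous 1 ∧ H = zeros k f

/-- The line through two points of `ℙⁿ` (the set of points whose representing line
lies in the plane spanned by the two points). -/
def lineThrough {n : ℕ} (p q : ProjSp k n) : Set (ProjSp k n) :=
  {z | z.submodule ≤ p.submodule ⊔ q.submodule}

/-- `S` is a cone with vertex `p`: `p ∈ S` and `S` is a union of lines through `p`.
For an irreducible divisor of degree `d` this is equivalent to `p` being a point of
multiplicity `d` on `S`. -/
def IsConeWithVertex {n : ℕ} (S : Set (ProjSp k n)) (p : ProjSp k n) : Prop :=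
  p ∈ S ∧ ∀ x ∈ S, lineThrough k p x ⊆ S

/-- The cone with vertex `p` over a set `A ⊆ ℙⁿ`: the union of the lines joining `p`
to the points of `A`. -/
def coneOver {n : ℕ} (p : ProjSp k n) (A : Set (ProjSp k n)) : Set (ProjSp k n) :=
  ⋃ a ∈ A, lineThrough k p a

/-- The data of a rational map `ℙⁿ ⇢ ℙᵐ`: an `(m+1)`-tuple of homogeneous polynomials
of a common degree in `n+1` variables. -/
structure RatMap (n m : ℕ) where
  deg : ℕ
  comp : Fin (m + 1) → MvPolynomial (Fin (n + 1)) k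
  homog : ∀ i, (comp i).IsHomogeneous deg

variable {k}

/-- The rational map is defined at `x` if not all of its components vanish at `x`. -/
def RatMap.Defined {n m : ℕ} (F : RatMap k n m) (x : ProjSp k n) : Prop :=
  (fun i => eval x.rep (F.comp i)) ≠ 0

open scoped Classical in
/-- The value of a rational map at a point (junk value where undefined). -/
noncomputable def RatMap.app {n m : ℕ} (F : RatMap k n m) (x : ProjSp k n) :
    ProjSp k m :=
  if h : (fun i => eval x.rep (F.comp i)) ≠ 0 then Projectivization.mk k _ h
  else Classical.arbitrary _

variable (k)

/-- `F` (with inverse `G`) restricts to a birational map from `A ⊆ ℙⁿ` onto `B ⊆ ℙᵐ`: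
there are hypersurface complements, each meeting `A` resp. `B`, on which `F` and `G`
are defined, map `A` into `B` (resp. `B` into `A`) and are mutually inverse.  For
irreducible closed `A`, `B` this says exactly that `F` induces a birational map
`A ⇢ B`, i.e. that the strict transform (proper image) of `A` under `F` is `B`. -/
def IsBirationalOn {n m : ℕ} (F : RatMap k n m) (G : RatMap k m n)
    (A : Set (ProjSp k n)) (B : Set (ProjSp k m)) : Prop :=
  ∃ (u : MvPolynomial (Fin (n + 1)) k) (v : MvPolynomial (Fin (m + 1)) k)
    (du dv : ℕ), u.IsHomogeneous du ∧ v.IsHomogeneous dv ∧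
    ¬ A ⊆ zeros k u ∧ ¬ B ⊆ zeros k v ∧
    (∀ x ∈ A \ zeros k u,
      F.Defined x ∧ F.app x ∈ B ∧ G.Defined (F.app x) ∧ G.app (F.app x) = x) ∧
    (∀ y ∈ B \ zeros k v,
      G.Defined y ∧ G.app y ∈ A ∧ F.Defined (G.app y) ∧ F.app (G.app y) = y)

/-- `A ⊆ ℙⁿ` and `B ⊆ ℙᵐ` are birational (as abstract varieties). -/
def Birational {n m : ℕ} (A : Set (ProjSp k n)) (B : Set (ProjSp k m)) : Prop :=
  ∃ (F : RatMap k n m) (G : RatMap k m n), IsBirationalOn k F G A B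

/-- Two divisors `D, D' ⊆ ℙⁿ` are Cremona equivalent: there is a birational self-map
`Φ` of `ℙⁿ` (a Cremona transformation) whose strict transform of `D` is `D'`,
i.e. `Φ` restricts to a birational map from `D` onto `D'`. -/
def CremonaEquivalent {n : ℕ} (D D' : Set (ProjSp k n)) : Prop :=
  ∃ (F : RatMap k n n) (G : RatMap k n n),
    IsBirationalOn k F G Set.univ Set.univ ∧ IsBirationalOn k F G D D'

/-- `C` is a rational variety: it is birational to some projective space. -/
def IsRationalVariety {n : ℕ} (C : Set (ProjSp k n)) : Prop :=
  ∃ m : ℕ, Birational k C (Set.univ : Set (ProjSp k m))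

end ProjSp

open ProjSp

/-!
After a linear change of coordinates the vertex is the point at infinity of the first affine axis,
so that in the affine chart `S` is a cylinder `f(x, y) = 0`, `z` being the first coordinate. A
birational map from `ℙ¹` to the section gives `c(t) ∈ k(t)²` with `f(c(t)) = 0`, and its inverse
gives `t = p / q` on the curve.

Up to Cremona equivalence only the local ring `O` of `𝔸³` along `S` matters. The element
`w = z f + p / q` of `O` has residue `t`, so `k(w)` is a subfield of `O`, and
`(x, y) = c(w) + f • (D₀, D₁)` with `D₀, D₁ ∈ O`: thus `S` is the exceptional divisor of the blow-up
of the rational curve `(c(w), w)`. Restricting the first-order terms in `f` to `S` gives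
`df(D₀, D₁) = 1` and expresses `z` as a linear form in `D₀, D₁` over `k(t)`. As `z` is
transcendental over `k(t)`, so is `D₀ / D₁`; therefore `f D₁`, `D₀ / D₁`, `w` are again affine
coordinates, and `S` is the plane where the first of them vanishes.
-/

open scoped Pointwise

section Polynomials

theorem eval_aeval {R σ τ : Type*} [CommSemiring R] (g : σ → MvPolynomial τ R)
    (p : MvPolynomial σ R) (v : τ → R) :
    eval v (aeval g p) = eval (fun i => eval v (g i)) p := by
  simpa only [aeval_eq_eval, RingHom.coe_coe] using comp_aeval_apply g (aeval v : _ →ₐ[R] R) p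

theorem aeval_mem {R A σ : Type*} [CommSemiring R] [CommSemiring A] [Algebra R A]
    (S : Subalgebra R A) {v : σ → A} (hv : ∀ i, v i ∈ S) (p : MvPolynomial σ R) : aeval v p ∈ S :=
  eval₂_mem (fun _ _ => S.algebraMap_mem _) hv

theorem exists_aeval_add_mul_eq {R A σ : Type*} [CommSemiring R] [CommSemiring A] [Algebra R A]
    [Fintype σ] (a h : σ → A) (ε : A) (p : MvPolynomial σ R) :
    ∃ r, aeval (fun i => a i + ε * h i) p =
      aeval a p + ε * ∑ i, aeval a (pderiv i p) * h i + ε ^ 2 * r := by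
  induction p using MvPolynomial.induction_on with
  | C c => exact ⟨0, by simp⟩
  | add p q hp hq =>
    obtain ⟨r, hr⟩ := hp
    obtain ⟨s, hs⟩ := hq
    refine ⟨r + s, ?_⟩
    simp only [map_add, hr, hs, add_mul, Finset.sum_add_distrib]
    ring
  | mul_X p j hp =>
    obtain ⟨r, hr⟩ := hp
    set D := ∑ i, aeval a (pderiv i p) * h i
    have hD : ∑ i, aeval a (pderiv i (p * X j)) * h i = aeval a p * h j + D * a j := by
      classical
      simp only [Derivation.leibniz, pderiv_X, smul_eq_mul, map_add, map_mul, aeval_X, add_mul,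
        Finset.sum_add_distrib, D, Finset.sum_mul]
      congr 1
      · rw [Finset.sum_eq_single j (by simp +contextual [eq_comm]) (by simp)]
        simp
      · exact Finset.sum_congr rfl fun i _ => by ring
    refine ⟨D * h j + r * (a j + ε * h j), ?_⟩
    rw [hD, map_mul, map_mul, hr, aeval_X, aeval_X]
    ring

theorem eval_smul_of_isHomogeneous {R σ : Type*} [CommSemiring R] {d : ℕ} {p : MvPolynomial σ R}
    (hp : p.IsHomogeneous d) (c : R) (v : σ → R) : eval (c • v) p = c ^ d * eval v p := by
  rw [eval_eq, eval_eq, Finset.mul_sum]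
  refine Finset.sum_congr rfl fun m hm => ?_
  have hdeg : ∑ i ∈ m.support, m i = d := by
    simpa [Finsupp.weight_apply, Finsupp.sum] using hp (mem_support_iff.mp hm)
  simp only [Pi.smul_apply, smul_eq_mul, mul_pow, Finset.prod_mul_distrib,
    Finset.prod_pow_eq_pow_sum, hdeg]
  ring

theorem dvd_of_forall_eval_eq_zero {k σ : Type*} [Field k] [IsAlgClosed k] [Finite σ]
    {f p : MvPolynomial σ k} (hf : Prime f) (h : ∀ v, eval v f = 0 → eval v p = 0) : f ∣ p := by
  have hprime : (Ideal.span {f}).IsPrime := (Ideal.span_singleton_prime hf.ne_zero).2 hf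
  rw [← Ideal.mem_span_singleton, ← IsPrime.vanishingIdeal_zeroLocus (K := k) (Ideal.span {f}),
    mem_vanishingIdeal_iff]
  simpa [zeroLocus_span, aeval_eq_eval] using h

/-- The homogenization of `p` to degree `N` by the extra variable `X 0`; it is only meaningful for
`p.totalDegree ≤ N`, as the exponents of `X 0` are truncated differences. -/
noncomputable def homogenization {R : Type*} [CommSemiring R] {n : ℕ} (N : ℕ)
    (p : MvPolynomial (Fin n) R) : MvPolynomial (Fin (n + 1)) R :=
  ∑ m ∈ p.support, monomial (Finsupp.cons (N - m.degree) m) (coeff m p)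

variable {R A : Type*} [CommSemiring R] [CommSemiring A] [Algebra R A] {n N : ℕ}
  {p : MvPolynomial (Fin n) R}

theorem degree_le_totalDegree {m : Fin n →₀ ℕ} (hm : m ∈ p.support) : m.degree ≤ p.totalDegree := by
  simpa [Finsupp.degree_apply, Finsupp.sum] using le_totalDegree hm

theorem isHomogeneous_homogenization (hN : p.totalDegree ≤ N) :
    (homogenization N p).IsHomogeneous N := by
  refine IsHomogeneous.sum _ _ _ fun m hm => isHomogeneous_monomial _ ?_
  have := (degree_le_totalDegree hm).trans hN
  simp only [Finsupp.degree_eq_sum, Fin.sum_univ_succ, Finsupp.cons_zero, Finsupp.cons_succ] at *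
  omega

theorem aeval_homogenization (hN : p.totalDegree ≤ N) {w : Fin (n + 1) → A} {v : Fin n → A}
    (hw : ∀ i, w i.succ = w 0 * v i) : aeval w (homogenization N p) = w 0 ^ N * aeval v p := by
  conv_rhs => rw [p.as_sum, map_sum, Finset.mul_sum]
  rw [homogenization, map_sum]
  refine Finset.sum_congr rfl fun m hm => ?_
  have hmN : m.degree ≤ N := (degree_le_totalDegree hm).trans hN
  simp only [aeval_monomial, Finsupp.prod_fintype _ _ fun _ => pow_zero _, Fin.prod_univ_succ,
    Finsupp.cons_zero, Finsupp.cons_succ, hw, mul_pow, Finset.prod_mul_distrib,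
    Finset.prod_pow_eq_pow_sum, ← Finsupp.degree_eq_sum]
  rw [← Nat.sub_add_cancel hmN, pow_add]
  simp only [Nat.add_sub_cancel]
  ring

theorem aeval_cons_one_homogenization (hN : p.totalDegree ≤ N) (v : Fin n → A) :
    aeval (Fin.cons 1 v : Fin (n + 1) → A) (homogenization N p) = aeval v p := by
  simpa using aeval_homogenization (w := Fin.cons 1 v) (v := v) hN (by simp)

end Polynomials

section RatFuncSpecialization

open Filter

variable {k : Type*} [Field k]

theorem eventually_polynomial_eval_ne_zero {p : Polynomial k} (hp : p ≠ 0) :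
    ∀ᶠ t in cofinite, p.eval t ≠ 0 := by
  simpa [eventually_cofinite, Polynomial.IsRoot] using Polynomial.finite_setOfPred_isRoot hp

theorem eventually_eval₂_denom_ne_zero (r : RatFunc k) :
    ∀ᶠ t in cofinite, r.denom.eval₂ (RingHom.id k) t ≠ 0 :=
  eventually_polynomial_eval_ne_zero r.denom_ne_zero

theorem ratFunc_eq_of_eventually_eval_eq [Infinite k] {r s : RatFunc k}
    (h : ∀ᶠ t in cofinite, r.eval (RingHom.id k) t = s.eval (RingHom.id k) t) : r = s := by
  suffices hcross : r.num * s.denom - s.num * r.denom = 0 by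
    rw [(RatFunc.num_mul_eq_mul_denom_iff s.denom_ne_zero).1 (sub_eq_zero.1 hcross),
      RatFunc.num_div_denom]
  by_contra hne
  obtain ⟨t, ht, hrs, hr, hs⟩ := (h.and ((eventually_polynomial_eval_ne_zero hne).and
    ((eventually_eval₂_denom_ne_zero r).and (eventually_eval₂_denom_ne_zero s)))).exists
  refine hrs ?_
  rw [RatFunc.eval, RatFunc.eval, div_eq_div_iff hr hs] at ht
  simpa [sub_eq_zero] using ht

theorem eventually_ratFunc_eval_mul (r s : RatFunc k) : ∀ᶠ t in cofinite,
    (r * s).eval (RingHom.id k) t = r.eval (RingHom.id k) t * s.eval (RingHom.id k) t := by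
  filter_upwards [eventually_eval₂_denom_ne_zero r, eventually_eval₂_denom_ne_zero s] with t hr hs
    using RatFunc.eval_mul _ _ hr hs

theorem eventually_ratFunc_eval_div (p : Polynomial k) {q : Polynomial k} (hq : q ≠ 0) :
    ∀ᶠ t in cofinite, (algebraMap _ (RatFunc k) p / algebraMap _ (RatFunc k) q).eval
      (RingHom.id k) t = p.eval t / q.eval t := by
  filter_upwards [eventually_polynomial_eval_ne_zero hq, eventually_ratFunc_eval_mul
    (algebraMap _ (RatFunc k) p / algebraMap _ (RatFunc k) q) (algebraMap _ _ q)] with t ht hmul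
  rw [div_mul_cancel₀ _ (RatFunc.algebraMap_ne_zero hq), RatFunc.eval_algebraMap,
    RatFunc.eval_algebraMap] at hmul
  exact eq_div_of_mul_eq ht hmul.symm

theorem eventually_ratFunc_eval_aeval {σ : Type*} (c : σ → RatFunc k) (p : MvPolynomial σ k) :
    ∀ᶠ t in cofinite, (aeval c p).eval (RingHom.id k) t =
      eval (fun i => (c i).eval (RingHom.id k) t) p := by
  induction p using MvPolynomial.induction_on with
  | C a => simp [RatFunc.algebraMap_eq_C]
  | add p q hp hq =>
    filter_upwards [hp, hq, eventually_eval₂_denom_ne_zero (aeval c p),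
      eventually_eval₂_denom_ne_zero (aeval c q)] with t hpt hqt hpd hqd
    rw [map_add, map_add, RatFunc.eval_add _ _ hpd hqd, hpt, hqt]
  | mul_X p i hp =>
    filter_upwards [hp, eventually_ratFunc_eval_mul (aeval c p) (c i)] with t hpt hmul
    rw [map_mul, map_mul, aeval_X, eval_X, hmul, hpt]

end RatFuncSpecialization

section Cylinders

variable {R A B : Type*} [CommRing R] [CommRing A] [CommRing B] [Algebra R A] [Algebra R B]
  [Algebra A B] [IsScalarTower R A B] {n : ℕ}

theorem aeval_cons_eq_eval_finSuccEquiv (z : A) (v : Fin n → A) (p : MvPolynomial (Fin (n + 1)) R) :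
    aeval (Fin.cons z v : Fin (n + 1) → A) p =
      ((finSuccEquiv R n p).map (aeval v : MvPolynomial (Fin n) R →ₐ[R] A).toRingHom).eval z := by
  induction p using MvPolynomial.induction_on with
  | C a => simp [finSuccEquiv_apply]
  | add p q hp hq => simp only [map_add, hp, hq, Polynomial.map_add, Polynomial.eval_add]
  | mul_X p i hp =>
    rw [map_mul, hp, map_mul, Polynomial.map_mul, Polynomial.eval_mul, aeval_X]
    cases i using Fin.cases with
    | zero => simp [finSuccEquiv_X_zero]
    | succ i => simp [finSuccEquiv_X_succ]

theorem X_zero_dvd_iff_coeff_finSuccEquiv (p : MvPolynomial (Fin (n + 1)) R) :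
    X 0 ∣ p ↔ (finSuccEquiv R n p).coeff 0 = 0 := by
  rw [← Polynomial.X_dvd_iff, ← finSuccEquiv_X_zero (R := R), map_dvd_iff]

theorem finSuccEquiv_rename_succ (f : MvPolynomial (Fin n) R) :
    finSuccEquiv R n (rename Fin.succ f) = Polynomial.C f := by
  induction f using MvPolynomial.induction_on with
  | C a => simp [finSuccEquiv_apply]
  | add p q hp hq => simp only [map_add, hp, hq]
  | mul_X p i hp => simp only [map_mul, hp, rename_X, finSuccEquiv_X_succ]

theorem rename_succ_dvd_iff (f : MvPolynomial (Fin n) R) (p : MvPolynomial (Fin (n + 1)) R) :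
    rename Fin.succ f ∣ p ↔ ∀ i, f ∣ (finSuccEquiv R n p).coeff i := by
  rw [← Polynomial.C_dvd_iff_dvd_coeff, ← finSuccEquiv_rename_succ, map_dvd_iff]

theorem aeval_cons_zero_eq_zero_iff {v : Fin n → A} (hv : AlgebraicIndependent R v)
    (p : MvPolynomial (Fin (n + 1)) R) :
    aeval (Fin.cons 0 v : Fin (n + 1) → A) p = 0 ↔ X 0 ∣ p := by
  rw [aeval_cons_eq_eval_finSuccEquiv, ← Polynomial.coeff_zero_eq_eval_zero, Polynomial.coeff_map,
    X_zero_dvd_iff_coeff_finSuccEquiv]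
  exact map_eq_zero_iff _ hv

theorem aeval_cons_eq_zero_iff_rename_succ_dvd {z : B} (hz : Transcendental A z) {v : Fin n → A}
    {f : MvPolynomial (Fin n) R} (hv : ∀ p, aeval v p = 0 ↔ f ∣ p)
    (p : MvPolynomial (Fin (n + 1)) R) :
    aeval (Fin.cons z fun i => algebraMap A B (v i) : Fin (n + 1) → B) p = 0 ↔
      rename Fin.succ f ∣ p := by
  have hmap : (aeval fun i => algebraMap A B (v i) : MvPolynomial (Fin n) R →ₐ[R] B).toRingHom =
      (algebraMap A B).comp (aeval v : MvPolynomial (Fin n) R →ₐ[R] A).toRingHom :=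
    RingHom.ext fun q => aeval_algebraMap_apply B v q
  rw [aeval_cons_eq_eval_finSuccEquiv, hmap, ← Polynomial.map_map, Polynomial.eval_map_algebraMap,
    rename_succ_dvd_iff]
  simp only [← hv]
  constructor
  · intro h i
    simpa using congrArg (Polynomial.coeff · i) (transcendental_iff.1 hz _ h)
  · intro h
    convert Polynomial.aeval_zero z
    ext i
    simpa using h i

theorem algebraicIndependent_cons_algebraMap {z : B} (hz : Transcendental A z) {v : Fin n → A}
    (hv : AlgebraicIndependent R v) :
    AlgebraicIndependent R (Fin.cons z fun i => algebraMap A B (v i) : Fin (n + 1) → B) := by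
  refine (injective_iff_map_eq_zero _).2 fun p hp => ?_
  have h0 : ∀ p, aeval v p = 0 ↔ 0 ∣ p := fun p => by rw [zero_dvd_iff]; exact map_eq_zero_iff _ hv
  simpa using (aeval_cons_eq_zero_iff_rename_succ_dvd hz h0 p).1 hp

theorem prime_rename_succ {f : MvPolynomial (Fin n) R} (hf : Prime f) :
    Prime (rename Fin.succ f) := by
  rw [← MulEquiv.prime_iff (finSuccEquiv R n), finSuccEquiv_rename_succ]
  exact Polynomial.prime_C_iff.2 hf

end Cylinders

section RationalFunctions

theorem isAlgebraic_of_one_eq_sum {K L ι : Type*} [Field K] [Field L] [Algebra K L] [Fintype ι]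
    {a : ι → K} {r u : ι → L} {d : L} (hr : ∀ i, IsAlgebraic K (r i)) (hu : ∀ i, u i = d * r i)
    (h1 : 1 = ∑ i, algebraMap K L (a i) * u i) (i : ι) : IsAlgebraic K (u i) := by
  have hs : IsAlgebraic K (∑ i, algebraMap K L (a i) * r i) :=
    mem_algebraicClosure_iff.1 (sum_mem fun i _ => mem_algebraicClosure_iff.2
      ((isAlgebraic_algebraMap (a i)).mul (hr i)))
  have hd : d = (∑ i, algebraMap K L (a i) * r i)⁻¹ := by
    refine eq_inv_of_mul_eq_one_left ?_
    rw [h1, Finset.mul_sum]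
    exact Finset.sum_congr rfl fun i _ => by rw [hu]; ring
  rw [hu, hd]
  exact hs.inv.mul (hr i)

theorem transcendental_div_of_linear_relations {K L : Type*} [Field K] [Field L] [Algebra K L]
    {Z : L} (hZ : Transcendental K Z) {s : K} (hs : s ≠ 0) {b d : Fin 2 → K} {u : Fin 2 → L}
    (h₁ : 1 = ∑ i, algebraMap K L (b i) * u i)
    (h₂ : algebraMap K L s * Z = ∑ i, algebraMap K L (d i) * u i) :
    u 1 ≠ 0 ∧ Transcendental K (u 0 / u 1) := by
  have hu : ¬ ∀ i, IsAlgebraic K (u i) := fun halg => hZ <| by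
    have hsum : IsAlgebraic K (∑ i, algebraMap K L (d i) * u i) :=
      mem_algebraicClosure_iff.1 (sum_mem fun i _ => mem_algebraicClosure_iff.2
        ((isAlgebraic_algebraMap (d i)).mul (halg i)))
    rw [← mul_div_cancel_left₀ Z ((map_ne_zero (algebraMap K L)).2 hs), h₂, div_eq_mul_inv]
    exact hsum.mul (isAlgebraic_algebraMap s).inv
  have hu1 : u 1 ≠ 0 := fun h => hu <| isAlgebraic_of_one_eq_sum (r := ![1, 0]) (d := u 0)
    (Fin.forall_fin_two.2 ⟨isAlgebraic_one, isAlgebraic_zero⟩)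
    (Fin.forall_fin_two.2 ⟨by simp, by simpa⟩) h₁
  exact ⟨hu1, fun h => hu <| isAlgebraic_of_one_eq_sum (r := ![u 0 / u 1, 1]) (d := u 1)
    (Fin.forall_fin_two.2 ⟨h, isAlgebraic_one⟩)
    (Fin.forall_fin_two.2 ⟨by simp [mul_div_cancel₀ _ hu1], by simp⟩) h₁⟩

variable {k O κ : Type*} [Field k] [CommRing O] [Algebra k O] [Field κ] [Algebra k κ]

theorem exists_algHom_ratFunc [Algebra (RatFunc k) κ] [IsScalarTower k (RatFunc k) κ]
    (ρ : O →ₐ[k] κ) [IsLocalHom ρ] {w : O} (hw : ρ w = algebraMap (RatFunc k) κ RatFunc.X) :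
    ∃ η : RatFunc k →ₐ[k] O, η RatFunc.X = w ∧ ∀ e, ρ (η e) = algebraMap (RatFunc k) κ e := by
  have hρ (q : Polynomial k) : ρ (Polynomial.aeval w q) =
      algebraMap (RatFunc k) κ (algebraMap (Polynomial k) (RatFunc k) q) := by
    rw [← Polynomial.aeval_algHom_apply, hw, Polynomial.aeval_algebraMap_apply, RatFunc.X,
      Polynomial.aeval_algebraMap_apply, Polynomial.aeval_X_left_apply]
  have hunit (q : nonZeroDivisors (Polynomial k)) :
      IsUnit (Polynomial.aeval w (q : Polynomial k)) :=
    isUnit_of_map_unit ρ _ (by simp [hρ, nonZeroDivisors.ne_zero q.2])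
  let η : RatFunc k →ₐ[k] O := IsLocalization.liftAlgHom (M := nonZeroDivisors (Polynomial k))
    (f := Polynomial.aeval w) hunit
  have hη (q : Polynomial k) : η (algebraMap _ _ q) = Polynomial.aeval w q :=
    IsLocalization.lift_eq hunit q
  refine ⟨η, by rw [RatFunc.X, hη, Polynomial.aeval_X], fun e => ?_⟩
  suffices (ρ : O →+* κ).comp η = algebraMap (RatFunc k) κ from RingHom.congr_fun this e
  refine IsLocalization.ringHom_ext (nonZeroDivisors (Polynomial k)) (RingHom.ext fun q => ?_)
  simp [hη, hρ]

theorem algHom_ratFunc_mem_adjoin {L : Type*} [Field L] [Algebra k L] (φ : RatFunc k →ₐ[k] L)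
    (e : RatFunc k) : φ e ∈ IntermediateField.adjoin k {φ RatFunc.X} := by
  rw [← Set.image_singleton, ← IntermediateField.adjoin_map, RatFunc.adjoin_X]
  exact ⟨e, trivial, rfl⟩

end RationalFunctions

namespace ProjSp

variable {k : Type} [Field k] {n m l : ℕ}

section RationalMaps

theorem mk_mem_zeros_iff {d : ℕ} {f : MvPolynomial (Fin (n + 1)) k} (hf : f.IsHomogeneous d)
    {v : Fin (n + 1) → k} (hv : v ≠ 0) :
    Projectivization.mk k v hv ∈ zeros k f ↔ eval v f = 0 := by
  obtain ⟨a, ha⟩ := Projectivization.exists_smul_eq_mk_rep k v hv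
  simp [zeros, ← ha, Units.smul_def, eval_smul_of_isHomogeneous hf]

theorem zeros_mul (f g : MvPolynomial (Fin (n + 1)) k) :
    zeros k (f * g) = zeros k f ∪ zeros k g := by
  ext; simp [zeros]

namespace RatMap

/-- The value of the components of a rational map at a vector. -/
noncomputable def evalVec (F : RatMap k n m) (v : Fin (n + 1) → k) : Fin (m + 1) → k :=
  fun i => eval v (F.comp i)

theorem evalVec_smul (F : RatMap k n m) (c : k) (v : Fin (n + 1) → k) :
    F.evalVec (c • v) = c ^ F.deg • F.evalVec v := by
  ext i
  simp [evalVec, eval_smul_of_isHomogeneous (F.homog i)]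

theorem eval_evalVec (F : RatMap k n m) (p : MvPolynomial (Fin (m + 1)) k) (v : Fin (n + 1) → k) :
    eval (F.evalVec v) p = eval v (aeval F.comp p) :=
  (eval_aeval F.comp p v).symm

theorem defined_mk_iff (F : RatMap k n m) {v : Fin (n + 1) → k} (hv : v ≠ 0) :
    F.Defined (Projectivization.mk k v hv) ↔ F.evalVec v ≠ 0 := by
  obtain ⟨a, ha⟩ := Projectivization.exists_smul_eq_mk_rep k v hv
  change F.evalVec (Projectivization.mk k v hv).rep ≠ 0 ↔ _
  simp [← ha, Units.smul_def, evalVec_smul]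

theorem app_mk (F : RatMap k n m) {v : Fin (n + 1) → k} (hv : v ≠ 0) (hF : F.evalVec v ≠ 0) :
    F.app (Projectivization.mk k v hv) = Projectivization.mk k (F.evalVec v) hF := by
  obtain ⟨a, ha⟩ := Projectivization.exists_smul_eq_mk_rep k v hv
  have hrep : F.evalVec (Projectivization.mk k v hv).rep = (a : k) ^ F.deg • F.evalVec v := by
    rw [← evalVec_smul, ← ha, Units.smul_def]
  have hdef : (fun i => eval (Projectivization.mk k v hv).rep (F.comp i)) ≠ 0 :=
    (defined_mk_iff F hv).2 hF
  rw [app, dif_pos hdef, Projectivization.mk_eq_mk_iff']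
  exact ⟨(a : k) ^ F.deg, hrep.symm⟩

/-- Composition of rational maps, by substitution of the components. -/
noncomputable def compose (F : RatMap k m l) (G : RatMap k n m) : RatMap k n l where
  deg := G.deg * F.deg
  comp i := aeval G.comp (F.comp i)
  homog i := (F.homog i).aeval _ G.homog

theorem evalVec_compose (F : RatMap k m l) (G : RatMap k n m) (v : Fin (n + 1) → k) :
    (F.compose G).evalVec v = F.evalVec (G.evalVec v) :=
  funext fun i => (eval_evalVec G (F.comp i) v).symm

theorem compose_apply {F : RatMap k m l} {G : RatMap k n m} {x : ProjSp k n} (hG : G.Defined x)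
    (hF : F.Defined (G.app x)) :
    (F.compose G).Defined x ∧ (F.compose G).app x = F.app (G.app x) := by
  induction x using Projectivization.ind with
  | h v hv =>
    rw [defined_mk_iff] at hG
    rw [app_mk G hv hG, defined_mk_iff, ← evalVec_compose] at hF
    refine ⟨(defined_mk_iff _ hv).2 hF, ?_⟩
    simp only [app_mk _ hv hF, app_mk G hv hG]
    rw [app_mk F hG (by rwa [← evalVec_compose])]
    congr 1
    exact evalVec_compose F G v

/-- `F` maps `A` into `B` with left inverse `G`: one half of `IsBirationalOn`. -/
def InvertsOn (G : RatMap k m n) (F : RatMap k n m) (A : Set (ProjSp k n)) (B : Set (ProjSp k m)) :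
    Prop :=
  ∀ x ∈ A, F.Defined x ∧ F.app x ∈ B ∧ G.Defined (F.app x) ∧ G.app (F.app x) = x

end RatMap

end RationalMaps

section LinearChange

/-- The linear automorphisms of the cone over `ℙⁿ`. -/
abbrev LinAut (k : Type) [Field k] (n : ℕ) : Type := (Fin (n + 1) → k) ≃ₗ[k] (Fin (n + 1) → k)

/-- A projective linear automorphism as a rational map. -/
noncomputable def RatMap.linear (g : LinAut k n) : RatMap k n n where
  deg := 1
  comp := (LinearMap.toMatrix' g.toLinearMap).toMvPolynomial
  homog := Matrix.toMvPolynomial_isHomogeneous _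

namespace RatMap

theorem evalVec_linear (g : LinAut k n) (v : Fin (n + 1) → k) : (linear g).evalVec v = g v := by
  ext i
  simp [evalVec, linear, Matrix.toMvPolynomial_eval_eq_apply, LinearMap.toMatrix'_mulVec]

theorem linear_apply (g : LinAut k n) (x : ProjSp k n) :
    (linear g).Defined x ∧ (linear g).app x = g • x := by
  induction x using Projectivization.ind with
  | h v hv =>
    have hgv : (linear g).evalVec v ≠ 0 := by simpa [evalVec_linear] using hv
    refine ⟨(defined_mk_iff _ hv).2 hgv, ?_⟩
    rw [app_mk _ hv hgv, Projectivization.smul_mk]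
    congr 1
    exact evalVec_linear g v

theorem aeval_linear_aeval_linear (g h : LinAut k n) (p : MvPolynomial (Fin (n + 1)) k) :
    aeval (linear g).comp (aeval (linear h).comp p) = aeval (linear (h * g)).comp p := by
  rw [comp_aeval_apply]
  congr 2
  ext1 i
  simp only [linear, LinearEquiv.mul_eq_trans, LinearEquiv.coe_trans, LinearMap.toMatrix'_comp,
    Matrix.toMvPolynomial_mul, aeval_eq_bind₁]

theorem aeval_linear_one (p : MvPolynomial (Fin (n + 1)) k) :
    aeval (linear (1 : LinAut k n)).comp p = p := by
  simp [linear]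

end RatMap

/-- The action of linear changes of coordinates on equations, `p ↦ p ∘ g⁻¹`. -/
noncomputable def substLinear (g : LinAut k n) :
    MvPolynomial (Fin (n + 1)) k ≃ₐ[k] MvPolynomial (Fin (n + 1)) k :=
  .ofAlgHom (aeval (RatMap.linear g⁻¹).comp) (aeval (RatMap.linear g).comp)
    (AlgHom.ext fun p => by
      rw [AlgHom.comp_apply, RatMap.aeval_linear_aeval_linear, mul_inv_cancel,
        RatMap.aeval_linear_one, AlgHom.id_apply])
    (AlgHom.ext fun p => by
      rw [AlgHom.comp_apply, RatMap.aeval_linear_aeval_linear, inv_mul_cancel,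
        RatMap.aeval_linear_one, AlgHom.id_apply])

theorem eval_substLinear (g : LinAut k n) (p : MvPolynomial (Fin (n + 1)) k)
    (v : Fin (n + 1) → k) : eval v (substLinear g p) = eval (g⁻¹ v) p := by
  rw [← RatMap.evalVec_linear, RatMap.eval_evalVec]
  rfl

theorem isHomogeneous_substLinear (g : LinAut k n) {d : ℕ} {p : MvPolynomial (Fin (n + 1)) k}
    (hp : p.IsHomogeneous d) : (substLinear g p).IsHomogeneous d := by
  have := hp.aeval _ (RatMap.linear g⁻¹).homog
  rwa [show (RatMap.linear g⁻¹).deg * d = d from one_mul d] at this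

theorem smul_zeros (g : LinAut k n) {d : ℕ} {p : MvPolynomial (Fin (n + 1)) k}
    (hp : p.IsHomogeneous d) : g • zeros k p = zeros k (substLinear g p) := by
  ext x
  induction x using Projectivization.ind with
  | h v hv =>
    rw [Set.mem_smul_set_iff_inv_smul_mem, Projectivization.smul_mk, mk_mem_zeros_iff hp,
      mk_mem_zeros_iff (isHomogeneous_substLinear g hp), eval_substLinear]
    rfl

theorem IsIrredDivisor.smul {D : Set (ProjSp k n)} (hD : IsIrredDivisor k D) (g : LinAut k n) :
    IsIrredDivisor k (g • D) := by
  obtain ⟨d, f, hd, hf, hirr, rfl⟩ := hD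
  exact ⟨d, substLinear g f, hd, isHomogeneous_substLinear g hf,
    (MulEquiv.irreducible_iff (substLinear g)).2 hirr, smul_zeros g hf⟩

theorem submodule_smul (g : LinAut k n) (p : ProjSp k n) :
    (g • p).submodule = p.submodule.map g.toLinearMap := by
  induction p using Projectivization.ind with
  | h v hv =>
    rw [Projectivization.smul_mk, Projectivization.submodule_mk, Projectivization.submodule_mk,
      Submodule.map_span, Set.image_singleton]
    rfl

theorem lineThrough_smul (g : LinAut k n) (p q : ProjSp k n) :
    lineThrough k (g • p) (g • q) = g • lineThrough k p q := by
  ext x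
  obtain ⟨x, rfl⟩ := MulAction.surjective g x
  rw [Set.smul_mem_smul_set_iff]
  simp only [lineThrough, Set.mem_ofPred_eq, submodule_smul, ← Submodule.map_sup]
  exact Submodule.map_le_map_iff_of_injective g.injective _ _

theorem IsConeWithVertex.smul {S : Set (ProjSp k n)} {p : ProjSp k n}
    (hS : IsConeWithVertex k S p) (g : LinAut k n) : IsConeWithVertex k (g • S) (g • p) := by
  refine ⟨Set.smul_mem_smul_set hS.1, ?_⟩
  rintro _ ⟨x, hx, rfl⟩
  change lineThrough k (g • p) (g • x) ⊆ _
  rw [lineThrough_smul]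
  exact Set.smul_set_mono (hS.2 x hx)

theorem RatMap.InvertsOn.smul_source {F : RatMap k n m} {G : RatMap k m n} {A : Set (ProjSp k n)}
    {B : Set (ProjSp k m)} (h : G.InvertsOn F A B) (g : LinAut k n) :
    ((linear g).compose G).InvertsOn (F.compose (.linear g⁻¹)) (g • A) B := by
  rintro _ ⟨x, hx, rfl⟩
  change Defined _ (g • x) ∧ app _ (g • x) ∈ B ∧ Defined _ (app _ (g • x)) ∧ _ = g • x
  obtain ⟨hF, hFB, hG, hGF⟩ := h x hx
  obtain ⟨hgdef, hg⟩ := linear_apply g⁻¹ (g • x)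
  rw [inv_smul_smul] at hg
  rw [← hg] at hF
  obtain ⟨hFg, hFg'⟩ := compose_apply hgdef hF
  rw [hg] at hFg'
  obtain ⟨hGg, hGg'⟩ := compose_apply hG (linear_apply g _).1
  rw [hFg']
  exact ⟨hFg, hFB, hGg, by rw [hGg', (linear_apply g _).2, hGF]⟩

theorem RatMap.InvertsOn.smul_target {F : RatMap k n m} {G : RatMap k m n} {A : Set (ProjSp k n)}
    {B : Set (ProjSp k m)} (h : G.InvertsOn F A B) (g : LinAut k m) :
    (G.compose (.linear g⁻¹)).InvertsOn ((linear g).compose F) A (g • B) := by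
  intro x hx
  obtain ⟨hF, hFB, hG, hGF⟩ := h x hx
  obtain ⟨hgF, hgF'⟩ := compose_apply hF (linear_apply g _).1
  rw [(linear_apply g _).2] at hgF'
  obtain ⟨hgdef, hg⟩ := linear_apply g⁻¹ (g • F.app x)
  rw [inv_smul_smul] at hg
  rw [← hg] at hG
  obtain ⟨hGg, hGg'⟩ := compose_apply hgdef hG
  rw [hgF']
  exact ⟨hgF, Set.smul_mem_smul_set hFB, hGg, by rw [hGg', hg, hGF]⟩

theorem IsBirationalOn.smul_source {F : RatMap k n m} {G : RatMap k m n} {A : Set (ProjSp k n)}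
    {B : Set (ProjSp k m)} (h : IsBirationalOn k F G A B) (g : LinAut k n) :
    IsBirationalOn k (F.compose (.linear g⁻¹)) ((RatMap.linear g).compose G) (g • A) B := by
  obtain ⟨u, v, du, dv, hu, hv, hAu, hBv, hF, hG⟩ := h
  refine ⟨substLinear g u, v, du, dv, isHomogeneous_substLinear g hu, hv, ?_, hBv, ?_,
    RatMap.InvertsOn.smul_target hG g⟩
  · rwa [← smul_zeros g hu, Set.smul_set_subset_smul_set_iff]
  · rw [← smul_zeros g hu, ← Set.smul_set_sdiff]
    exact RatMap.InvertsOn.smul_source hF g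

theorem CremonaEquivalent.of_smul_left {D D' : Set (ProjSp k n)} {g : LinAut k n}
    (h : CremonaEquivalent k (g • D) D') : CremonaEquivalent k D D' := by
  obtain ⟨F, G, huniv, hD⟩ := h
  refine ⟨_, _, ?_, by simpa only [inv_smul_smul] using hD.smul_source g⁻¹⟩
  simpa only [Set.smul_set_univ] using huniv.smul_source g⁻¹

end LinearChange

section AffineChart

/-- The point `[1 : v]` of the affine chart `{X 0 ≠ 0}` of `ℙⁿ`. -/
def affinePoint (v : Fin n → k) : ProjSp k n :=
  Projectivization.mk k (Fin.cons 1 v) (Function.ne_iff.2 ⟨0, one_ne_zero⟩)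

theorem mk_eq_affinePoint {w : Fin (n + 1) → k} (hw : w ≠ 0) (hw0 : w 0 ≠ 0) :
    Projectivization.mk k w hw = affinePoint fun i => w i.succ / w 0 := by
  rw [affinePoint, Projectivization.mk_eq_mk_iff']
  refine ⟨w 0, funext fun i => ?_⟩
  cases i using Fin.cases <;> simp [mul_div_cancel₀ _ hw0]

theorem exists_eq_affinePoint {x : ProjSp k n} (hx : x ∉ zeros k (X 0)) :
    ∃ v, x = affinePoint v := by
  induction x using Projectivization.ind with
  | h w hw =>
    rw [mk_mem_zeros_iff (isHomogeneous_X _ _), eval_X] at hx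
    exact ⟨_, mk_eq_affinePoint hw hx⟩

theorem affinePoint_mem_zeros_iff {d : ℕ} {f : MvPolynomial (Fin (n + 1)) k}
    (hf : f.IsHomogeneous d) (v : Fin n → k) :
    affinePoint v ∈ zeros k f ↔ eval (Fin.cons 1 v) f = 0 :=
  mk_mem_zeros_iff hf _

theorem affinePoint_notMem_zeros_X_zero (v : Fin n → k) : affinePoint v ∉ zeros k (X 0) := by
  simp [affinePoint_mem_zeros_iff (isHomogeneous_X k 0)]

theorem eval_cons_one_homogenization {N : ℕ} {p : MvPolynomial (Fin n) k}
    (hN : p.totalDegree ≤ N) (v : Fin n → k) :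
    eval (Fin.cons 1 v) (homogenization N p) = eval v p := by
  simpa only [aeval_eq_eval] using aeval_cons_one_homogenization (A := k) hN v

theorem affinePoint_mem_zeros_homogenization {N : ℕ} {p : MvPolynomial (Fin n) k}
    (hN : p.totalDegree ≤ N) (v : Fin n → k) :
    affinePoint v ∈ zeros k (homogenization N p) ↔ eval v p = 0 := by
  rw [affinePoint_mem_zeros_iff (isHomogeneous_homogenization hN), eval_cons_one_homogenization hN]

theorem eval_eq_zero_iff_affinePoint_mem_zeros {d : ℕ} {p : MvPolynomial (Fin (n + 1)) k}
    (hp : p.IsHomogeneous d) {w : Fin (n + 1) → k} (hw0 : w 0 ≠ 0) :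
    eval w p = 0 ↔ affinePoint (fun i => w i.succ / w 0) ∈ zeros k p := by
  have hw : w ≠ 0 := fun h => hw0 (congrFun h 0)
  rw [← mk_eq_affinePoint hw hw0, mk_mem_zeros_iff hp]

theorem eq_zero_of_forall_affinePoint_mem_zeros [Infinite k] {d : ℕ}
    {p : MvPolynomial (Fin (n + 1)) k} (hp : p.IsHomogeneous d)
    (h : ∀ v, affinePoint v ∈ zeros k p) : p = 0 := by
  suffices X 0 * p = 0 from (mul_eq_zero.1 this).resolve_left (X_ne_zero 0)
  refine MvPolynomial.funext fun w => ?_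
  by_cases hw : w 0 = 0
  · simp [hw]
  · simp [(eval_eq_zero_iff_affinePoint_mem_zeros hp hw).2 (h _)]

theorem dvd_X_zero_mul_of_forall_affinePoint [IsAlgClosed k] {d e : ℕ}
    {f p : MvPolynomial (Fin (n + 1)) k} (hf : f.IsHomogeneous d) (hprime : Prime f)
    (hp : p.IsHomogeneous e) (h : ∀ v, affinePoint v ∈ zeros k f → affinePoint v ∈ zeros k p) :
    f ∣ X 0 * p := by
  refine dvd_of_forall_eval_eq_zero hprime fun w hw => ?_
  rw [map_mul, eval_X, mul_eq_zero, or_iff_not_imp_left]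
  intro hw0
  rw [eval_eq_zero_iff_affinePoint_mem_zeros hf hw0] at hw
  exact (eval_eq_zero_iff_affinePoint_mem_zeros hp hw0).2 (h _ hw)

/-- A rational map `𝔸ⁿ ⇢ 𝔸ᵐ`, written with a common denominator. -/
structure AffineRatMap (k : Type) [Field k] (n m : ℕ) where
  den : MvPolynomial (Fin n) k
  num : Fin m → MvPolynomial (Fin n) k

namespace AffineRatMap

/-- The value of a rational map at a point of `𝔸ⁿ` (zero where the denominator vanishes). -/
noncomputable def app (φ : AffineRatMap k n m) (v : Fin n → k) : Fin m → k :=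
  fun i => eval v (φ.num i) / eval v φ.den

/-- The homogeneous coordinates `[den : num 0 : …]` of a rational map to `𝔸ᵐ ⊆ ℙᵐ`. -/
noncomputable def homogCoords (φ : AffineRatMap k n m) : Fin (m + 1) → MvPolynomial (Fin n) k :=
  Fin.cons φ.den φ.num

/-- A common bound for the degrees of the homogeneous coordinates. -/
noncomputable def degree (φ : AffineRatMap k n m) : ℕ :=
  Finset.univ.sup fun i => (φ.homogCoords i).totalDegree

theorem totalDegree_homogCoords_le (φ : AffineRatMap k n m) (i : Fin (m + 1)) :
    (φ.homogCoords i).totalDegree ≤ φ.degree :=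
  Finset.le_sup (f := fun i => (φ.homogCoords i).totalDegree) (Finset.mem_univ i)

/-- The extension of a rational map to projective spaces. -/
noncomputable def toRatMap (φ : AffineRatMap k n m) : RatMap k n m where
  deg := φ.degree
  comp i := homogenization φ.degree (φ.homogCoords i)
  homog i := isHomogeneous_homogenization (φ.totalDegree_homogCoords_le i)

theorem toRatMap_apply {φ : AffineRatMap k n m} {v : Fin n → k} (hv : eval v φ.den ≠ 0) :
    φ.toRatMap.Defined (affinePoint v) ∧
      φ.toRatMap.app (affinePoint v) = affinePoint (φ.app v) := by
  have hcomp (i) : φ.toRatMap.evalVec (Fin.cons 1 v) i = eval v (φ.homogCoords i) :=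
    eval_cons_one_homogenization (φ.totalDegree_homogCoords_le i) v
  have h0 : φ.toRatMap.evalVec (Fin.cons 1 v) 0 ≠ 0 := by rwa [hcomp]
  have hne : φ.toRatMap.evalVec (Fin.cons 1 v) ≠ 0 := Function.ne_iff.2 ⟨0, h0⟩
  refine ⟨(RatMap.defined_mk_iff _ _).2 hne, ?_⟩
  rw [affinePoint, RatMap.app_mk _ _ hne, mk_eq_affinePoint hne h0]
  simp only [hcomp]
  rfl

theorem invertsOn_toRatMap {φ : AffineRatMap k n m} {ψ : AffineRatMap k m n}
    {U : MvPolynomial (Fin n) k} {A : Set (ProjSp k n)} {B : Set (ProjSp k m)}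
    (h : ∀ v, affinePoint v ∈ A → eval v U ≠ 0 → eval v φ.den ≠ 0 ∧ affinePoint (φ.app v) ∈ B ∧
      eval (φ.app v) ψ.den ≠ 0 ∧ ψ.app (φ.app v) = v) :
    ψ.toRatMap.InvertsOn φ.toRatMap (A \ zeros k (X 0 * homogenization U.totalDegree U)) B := by
  rintro x ⟨hxA, hx⟩
  rw [zeros_mul, Set.mem_union, not_or] at hx
  obtain ⟨v, rfl⟩ := exists_eq_affinePoint hx.1
  rw [affinePoint_mem_zeros_homogenization le_rfl] at hx
  obtain ⟨hden, hB, hden', hinv⟩ := h v hxA hx.2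
  obtain ⟨hdef, happ⟩ := toRatMap_apply hden
  obtain ⟨hdef', happ'⟩ := toRatMap_apply hden'
  rw [happ]
  exact ⟨hdef, hB, hdef', by rw [happ', hinv]⟩

theorem not_subset_zeros_of_affinePoint_mem {U : MvPolynomial (Fin n) k} {A : Set (ProjSp k n)}
    {v : Fin n → k} (hA : affinePoint v ∈ A) (hU : eval v U ≠ 0) :
    ¬ A ⊆ zeros k (X 0 * homogenization U.totalDegree U) := by
  intro hsub
  have hmem := hsub hA
  rw [zeros_mul, Set.mem_union, affinePoint_mem_zeros_homogenization le_rfl] at hmem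
  exact hmem.elim (affinePoint_notMem_zeros_X_zero v) hU

variable {B : Type*} [CommRing B] [Algebra k B] {x : Fin n → B} {y : Fin m → B}

/-- `φ` sends the `B`-valued point `x` to `y`, with the denominator cleared. -/
def SendsTo (φ : AffineRatMap k n m) (x : Fin n → B) (y : Fin m → B) : Prop :=
  ∀ i, aeval x (φ.num i) = aeval x φ.den * y i

/-- The numerator of the pullback of a polynomial under a rational map. -/
noncomputable def pullback (φ : AffineRatMap k n m) (p : MvPolynomial (Fin m) k) :
    MvPolynomial (Fin n) k :=
  aeval φ.homogCoords (homogenization p.totalDegree p)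

theorem SendsTo.aeval_pullback {φ : AffineRatMap k n m} (h : φ.SendsTo x y)
    (p : MvPolynomial (Fin m) k) :
    aeval x (φ.pullback p) = aeval x φ.den ^ p.totalDegree * aeval y p := by
  rw [pullback, comp_aeval_apply]
  exact aeval_homogenization le_rfl h

theorem sendsTo_app {φ : AffineRatMap k n m} {v : Fin n → k} (hv : eval v φ.den ≠ 0) :
    φ.SendsTo v (φ.app v) := fun i => by
  simp only [aeval_eq_eval, app, mul_div_cancel₀ _ hv]

theorem eval_pullback {φ : AffineRatMap k n m} {v : Fin n → k} (hv : eval v φ.den ≠ 0)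
    (p : MvPolynomial (Fin m) k) :
    eval v (φ.pullback p) = eval v φ.den ^ p.totalDegree * eval (φ.app v) p := by
  simpa only [aeval_eq_eval] using (sendsTo_app hv).aeval_pullback p

end AffineRatMap

end AffineChart

section DivisorCharts

variable {O κ : Type*} [CommRing O] [Algebra k O] [Field κ] [Algebra k κ] {ρ : O →ₐ[k] κ}

/-- `O` consists of fractions of polynomials in the coordinates `x` with denominators prime to `f`,
and `ρ` restricts them to the prime divisor `f = 0`. If `ρ` is a local homomorphism, then `O` is the
local ring of affine space along this divisor. -/
structure IsDivisorChart (ρ : O →ₐ[k] κ) (x : Fin n → O) (f : MvPolynomial (Fin n) k) : Prop where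
  residue_eq_zero_iff : ∀ p, ρ (aeval x p) = 0 ↔ f ∣ p
  injective : Function.Injective (aeval x : MvPolynomial (Fin n) k → O)
  exists_fraction : ∀ o, ∃ p q : MvPolynomial (Fin n) k, ¬ f ∣ q ∧ aeval x p = aeval x q * o

namespace IsDivisorChart

variable {x : Fin n → O} {f : MvPolynomial (Fin n) k} {y : Fin m → O} {g : MvPolynomial (Fin m) k}

theorem exists_sendsTo (hx : IsDivisorChart ρ x f) (hf : Prime f) (y : Fin m → O) :
    ∃ φ : AffineRatMap k n m, ¬ f ∣ φ.den ∧ φ.SendsTo x y := by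
  choose p q hq hpq using fun i => hx.exists_fraction (y i)
  refine ⟨⟨∏ i, q i, fun i => p i * ∏ j ∈ Finset.univ.erase i, q j⟩, ?_, fun i => ?_⟩
  · simpa [hf.dvd_finsetProd_iff] using hq
  · simp only [← Finset.mul_prod_erase _ q (Finset.mem_univ i), map_mul, hpq]
    ring

variable {φ : AffineRatMap k n m} {ψ : AffineRatMap k m n}

theorem dvd_pullback_iff (hx : IsDivisorChart ρ x f) (hy : IsDivisorChart ρ y g)
    (hφ : φ.SendsTo x y) (hden : ¬ f ∣ φ.den) (p : MvPolynomial (Fin m) k) :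
    f ∣ φ.pullback p ↔ g ∣ p := by
  have hden' : ρ (aeval x φ.den) ≠ 0 := mt (hx.residue_eq_zero_iff _).1 hden
  rw [← hx.residue_eq_zero_iff, hφ.aeval_pullback, map_mul, map_pow,
    mul_eq_zero_iff_left (pow_ne_zero _ hden'), hy.residue_eq_zero_iff]

theorem app_app (hx : IsDivisorChart ρ x f) (hφ : φ.SendsTo x y) (hψ : ψ.SendsTo y x)
    {v : Fin n → k} (hφv : eval v φ.den ≠ 0) (hψv : eval (φ.app v) ψ.den ≠ 0) :
    ψ.app (φ.app v) = v := by
  funext i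
  have hpoly : φ.pullback (ψ.num i) * φ.den ^ ψ.den.totalDegree =
      φ.den ^ (ψ.num i).totalDegree * φ.pullback ψ.den * X i := by
    apply hx.injective
    simp only [map_mul, map_pow, hφ.aeval_pullback, hψ i, aeval_X]
    ring
  have hval := congrArg (eval v) hpoly
  simp only [map_mul, map_pow, AffineRatMap.eval_pullback hφv, eval_X] at hval
  rw [AffineRatMap.app, div_eq_iff hψv]
  refine mul_left_cancel₀ (mul_ne_zero (pow_ne_zero (ψ.num i).totalDegree hφv)
    (pow_ne_zero ψ.den.totalDegree hφv)) ?_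
  linear_combination hval

theorem invertsOn (hx : IsDivisorChart ρ x f) (hφ : φ.SendsTo x y) (hψ : ψ.SendsTo y x)
    {A : Set (ProjSp k n)} {B : Set (ProjSp k m)}
    (hAB : ∀ v, affinePoint v ∈ A → eval v φ.den ≠ 0 → affinePoint (φ.app v) ∈ B) :
    ψ.toRatMap.InvertsOn φ.toRatMap (A \ zeros k (X 0 *
      homogenization (φ.den * φ.pullback ψ.den).totalDegree (φ.den * φ.pullback ψ.den))) B := by
  refine AffineRatMap.invertsOn_toRatMap fun v hvA hU => ?_
  rw [map_mul] at hU
  have hφv : eval v φ.den ≠ 0 := left_ne_zero_of_mul hU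
  have hψv : eval (φ.app v) ψ.den ≠ 0 := by
    rw [AffineRatMap.eval_pullback hφv] at hU
    exact right_ne_zero_of_mul (right_ne_zero_of_mul hU)
  exact ⟨hφv, hAB v hvA hφv, hψv, hx.app_app hφ hψ hφv hψv⟩

theorem affinePoint_app_mem (hx : IsDivisorChart ρ x f) (hy : IsDivisorChart ρ y g)
    (hφ : φ.SendsTo x y) (hden : ¬ f ∣ φ.den) {A : Set (ProjSp k n)} {B : Set (ProjSp k m)}
    (hA : ∀ v, affinePoint v ∈ A ↔ eval v f = 0) (hB : ∀ v, affinePoint v ∈ B ↔ eval v g = 0)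
    (v : Fin n → k) (hvA : affinePoint v ∈ A) (hv : eval v φ.den ≠ 0) :
    affinePoint (φ.app v) ∈ B := by
  obtain ⟨c, hc⟩ := (hx.dvd_pullback_iff hy hφ hden g).2 dvd_rfl
  have hval := congrArg (eval v) hc
  rw [AffineRatMap.eval_pullback hv, map_mul, (hA v).1 hvA, zero_mul] at hval
  exact (hB _).2 ((mul_eq_zero_iff_left (pow_ne_zero _ hv)).1 hval)

end IsDivisorChart

theorem cremonaEquivalent_of_isDivisorChart [IsAlgClosed k] {x y : Fin n → O}
    {f g : MvPolynomial (Fin n) k} (hf : Prime f) (hg : Prime g) (hx : IsDivisorChart ρ x f)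
    (hy : IsDivisorChart ρ y g) {A B : Set (ProjSp k n)}
    (hA : ∀ v, affinePoint v ∈ A ↔ eval v f = 0) (hB : ∀ v, affinePoint v ∈ B ↔ eval v g = 0) :
    CremonaEquivalent k A B := by
  obtain ⟨φ, hφden, hφ⟩ := hx.exists_sendsTo hf y
  obtain ⟨ψ, hψden, hψ⟩ := hy.exists_sendsTo hg x
  have hU : ¬ f ∣ φ.den * φ.pullback ψ.den :=
    hf.not_dvd_mul hφden (mt (hx.dvd_pullback_iff hy hφ hφden _).1 hψden)
  have hV : ¬ g ∣ ψ.den * ψ.pullback φ.den :=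
    hg.not_dvd_mul hψden (mt (hy.dvd_pullback_iff hx hψ hψden _).1 hφden)
  obtain ⟨v, hvA, hvU⟩ : ∃ v, eval v f = 0 ∧ eval v (φ.den * φ.pullback ψ.den) ≠ 0 := by
    simpa using mt (dvd_of_forall_eval_eq_zero hf) hU
  obtain ⟨w, hwB, hwV⟩ : ∃ w, eval w g = 0 ∧ eval w (ψ.den * ψ.pullback φ.den) ≠ 0 := by
    simpa using mt (dvd_of_forall_eval_eq_zero hg) hV
  have hdeg (p : MvPolynomial (Fin n) k) :=
    (isHomogeneous_X k 0).mul (isHomogeneous_homogenization (p := p) le_rfl)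
  exact ⟨φ.toRatMap, ψ.toRatMap,
    ⟨_, _, _, _, hdeg _, hdeg _,
      AffineRatMap.not_subset_zeros_of_affinePoint_mem (Set.mem_univ _) hvU,
      AffineRatMap.not_subset_zeros_of_affinePoint_mem (Set.mem_univ _) hwV,
      hx.invertsOn hφ hψ fun _ _ _ => Set.mem_univ _,
      hy.invertsOn hψ hφ fun _ _ _ => Set.mem_univ _⟩,
    ⟨_, _, _, _, hdeg _, hdeg _,
      AffineRatMap.not_subset_zeros_of_affinePoint_mem ((hA v).2 hvA) hvU,
      AffineRatMap.not_subset_zeros_of_affinePoint_mem ((hB w).2 hwB) hwV,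
      hx.invertsOn hφ hψ (hx.affinePoint_app_mem hy hφ hφden hA hB),
      hy.invertsOn hψ hφ (hy.affinePoint_app_mem hx hψ hψden hB hA)⟩⟩

end DivisorCharts

section LocalRings

theorem exists_isDivisorChart {κ : Type} [Field κ] [Algebra k κ] {v : Fin n → κ}
    {f : MvPolynomial (Fin n) k} (hv : ∀ p, aeval v p = 0 ↔ f ∣ p) :
    ∃ (O : Type) (_ : CommRing O) (_ : IsDomain O) (_ : Algebra k O) (ρ : O →ₐ[k] κ)
      (x : Fin n → O), IsDivisorChart ρ x f ∧ IsLocalHom ρ ∧ ∀ i, ρ (x i) = v i := by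
  let P := RingHom.ker (aeval v : MvPolynomial (Fin n) k →ₐ[k] κ)
  have hP : P.IsPrime := RingHom.ker_isPrime _
  have hle := P.primeCompl_le_nonZeroDivisors
  have hunit (s : P.primeCompl) : IsUnit (aeval v (s : MvPolynomial (Fin n) k)) :=
    isUnit_iff_ne_zero.2 s.2
  let O := Localization.AtPrime P
  let ι : MvPolynomial (Fin n) k →ₐ[k] O := IsScalarTower.toAlgHom k _ O
  let ρ : O →ₐ[k] κ := IsLocalization.liftAlgHom (M := P.primeCompl) (f := aeval v) hunit
  have hρ (p) : ρ (ι p) = aeval v p := IsLocalization.lift_eq (M := P.primeCompl) hunit p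
  have hι (p) : aeval (fun i => ι (X i)) p = ι p := by rw [← comp_aeval_apply, aeval_X_left_apply]
  have hfrac (o) : ∃ p q, ¬ f ∣ q ∧ ι p = ι q * o := by
    obtain ⟨⟨p, s⟩, hs⟩ := IsLocalization.surj P.primeCompl o
    exact ⟨p, s, mt (hv _).2 s.2, by rw [mul_comm]; exact hs.symm⟩
  refine ⟨O, inferInstance, IsLocalization.isDomain_localization hle, inferInstance, ρ,
    fun i => ι (X i), ⟨fun p => ?_, fun p q hpq => ?_, ?_⟩, ⟨fun o ho => ?_⟩, fun i => ?_⟩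
  · rw [hι, hρ, hv]
  · rw [hι, hι] at hpq
    exact IsLocalization.injective O hle hpq
  · simpa only [hι] using hfrac
  · obtain ⟨p, q, hq, hpq⟩ := hfrac o
    have hp : aeval v p ≠ 0 := by
      rw [← hρ, hpq, map_mul, hρ]
      exact mul_ne_zero (mt (hv q).1 hq) ho.ne_zero
    exact isUnit_of_mul_isUnit_right
      (hpq ▸ IsLocalization.map_units O (⟨p, hp⟩ : P.primeCompl) : IsUnit (ι q * o))
  · rw [hρ, aeval_X]

namespace IsDivisorChart

variable {O κ : Type*} [CommRing O] [Algebra k O] [Field κ] [Algebra k κ]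
  {ρ : O →ₐ[k] κ} {x : Fin n → O} {f : MvPolynomial (Fin n) k} {y : Fin m → O}
  {g : MvPolynomial (Fin m) k}

theorem exists_eq_mul (hx : IsDivisorChart ρ x f) [IsLocalHom ρ] {o : O} (ho : ρ o = 0) :
    ∃ o', o = aeval x f * o' := by
  obtain ⟨p, q, hq, hpq⟩ := hx.exists_fraction o
  have hp : ρ (aeval x p) = 0 := by rw [hpq, map_mul, ho, mul_zero]
  obtain ⟨r, rfl⟩ := (hx.residue_eq_zero_iff p).1 hp
  have hqu : IsUnit (aeval x q) :=
    isUnit_of_map_unit ρ _ (isUnit_iff_ne_zero.2 (mt (hx.residue_eq_zero_iff q).1 hq))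
  obtain ⟨u, hu⟩ := hqu
  rw [← hu] at hpq
  refine ⟨↑u⁻¹ * aeval x r, ?_⟩
  rw [← Units.inv_mul_cancel_left u o, ← hpq, map_mul]
  ring

variable [IsDomain O]

/-- Powers of the equation `g` in the denominator cancel, since `g` is a nonzero nonunit of `O`. -/
theorem of_fractions (hg : Prime g) (hker : ∀ p, ρ (aeval y p) = 0 ↔ g ∣ p) (hg0 : aeval y g ≠ 0)
    (hfrac : ∀ o, ∃ p q : MvPolynomial (Fin m) k, aeval y q ≠ 0 ∧ aeval y p = aeval y q * o) :
    IsDivisorChart ρ y g := by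
  have hfactor {q : MvPolynomial (Fin m) k} (hq : q ≠ 0) : ∃ (e : ℕ) (r : MvPolynomial (Fin m) k),
      ¬ g ∣ r ∧ q = g ^ e * r := WfDvdMonoid.max_power_factor hq hg.irreducible
  refine ⟨hker, (injective_iff_map_eq_zero _).2 fun p hp => ?_, fun o => ?_⟩
  · by_contra hp0
    obtain ⟨e, r, hr, rfl⟩ := hfactor hp0
    rw [map_mul, map_pow, mul_eq_zero_iff_left (pow_ne_zero _ hg0)] at hp
    exact hr ((hker r).1 (by rw [hp, map_zero]))
  · obtain ⟨p, q, hq, hpq⟩ := hfrac o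
    obtain ⟨e, r, hr, rfl⟩ := hfactor (q := q) (by rintro rfl; simp at hq)
    suffices h : ∀ (e : ℕ) (p : MvPolynomial (Fin m) k), aeval y p = aeval y (g ^ e * r) * o →
        ∃ p', aeval y p' = aeval y r * o by
      obtain ⟨p', hp'⟩ := h e p hpq
      exact ⟨p', r, hr, hp'⟩
    intro e
    induction e with
    | zero => exact fun p hp => ⟨p, by simpa using hp⟩
    | succ e ih =>
      intro p hp
      have hgp : g ∣ p := (hker p).1 (by simp [hp, pow_succ, (hker g).2 dvd_rfl])
      obtain ⟨p, rfl⟩ := hgp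
      refine ih p (mul_left_cancel₀ hg0 ?_)
      rw [← map_mul, hp]
      simp only [map_mul, map_pow]
      ring

theorem change_coords (hx : IsDivisorChart ρ x f) (hg : Prime g)
    (hker : ∀ p, ρ (aeval y p) = 0 ↔ g ∣ p) (hg0 : aeval y g ≠ 0)
    (hxy : ∀ i, algebraMap O (FractionRing O) (x i) ∈
      IntermediateField.adjoin k (Set.range fun j => algebraMap O (FractionRing O) (y j))) :
    IsDivisorChart ρ y g := by
  let j : O →ₐ[k] FractionRing O := IsScalarTower.toAlgHom k O (FractionRing O)
  have hj : Function.Injective j := IsFractionRing.injective O (FractionRing O)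
  set E := IntermediateField.adjoin k (Set.range fun i => j (y i))
  have haeval (p : MvPolynomial (Fin n) k) : j (aeval x p) ∈ E := by
    rw [comp_aeval_apply]
    exact aeval_mem E.toSubalgebra hxy p
  have hmem (o : O) : j o ∈ E := by
    obtain ⟨p, q, hq, hpq⟩ := hx.exists_fraction o
    have hq0 : aeval x q ≠ 0 := fun h => hq ((hx.residue_eq_zero_iff q).1 (by rw [h, map_zero]))
    rw [← mul_div_cancel_left₀ (j o) ((map_ne_zero_iff j hj).2 hq0), ← map_mul, ← hpq]
    exact E.div_mem (haeval p) (haeval q)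
  refine of_fractions hg hker hg0 fun o => ?_
  obtain ⟨p, q, hpq⟩ := (IntermediateField.mem_adjoin_range_iff k _ _).1 (hmem o)
  rw [← comp_aeval_apply, ← comp_aeval_apply] at hpq
  by_cases hq : aeval y q = 0
  · rw [hq, map_zero, div_zero, map_eq_zero_iff j hj] at hpq
    exact ⟨0, 1, by simp, by simp [hpq]⟩
  · refine ⟨p, q, hq, hj ?_⟩
    rw [map_mul, hpq, mul_div_cancel₀ _ ((map_ne_zero_iff j hj).2 hq)]

end IsDivisorChart

end LocalRings

section Parametrizations

open Filter

/-- The coordinates `c` parametrize the hypersurface `f = 0` by `𝔸¹`, and the parameter is a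
rational function on it. -/
structure IsProperParametrization (c : Fin n → RatFunc k) (f : MvPolynomial (Fin n) k) : Prop where
  aeval_eq_zero_iff : ∀ p, aeval c p = 0 ↔ f ∣ p
  exists_parameter :
    ∃ p q : MvPolynomial (Fin n) k, aeval c q ≠ 0 ∧ aeval c p = RatFunc.X * aeval c q

/-- The point `[1 : t]` of the projective line. -/
def linePoint (t : k) : ProjSp k 1 :=
  affinePoint fun _ => t

theorem zeros_zero : zeros k (0 : MvPolynomial (Fin (n + 1)) k) = Set.univ := by
  simp [zeros]

theorem RatMap.app_mem_zeros_iff {G : RatMap k n m} {x : ProjSp k n} {d : ℕ}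
    {p : MvPolynomial (Fin (m + 1)) k} (hp : p.IsHomogeneous d) (hx : G.Defined x) :
    G.app x ∈ zeros k p ↔ x ∈ zeros k (aeval G.comp p) := by
  induction x using Projectivization.ind with
  | h w hw =>
    rw [RatMap.defined_mk_iff] at hx
    rw [RatMap.app_mk _ _ hx, mk_mem_zeros_iff hp, RatMap.eval_evalVec,
      mk_mem_zeros_iff (hp.aeval G.comp G.homog)]

/-- The restriction of a binary form to the points `[1 : t]`. -/
noncomputable def dehomogenize (b : MvPolynomial (Fin 2) k) : Polynomial k :=
  aeval (Fin.cons 1 fun _ => Polynomial.X) b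

theorem eval_dehomogenize (b : MvPolynomial (Fin 2) k) (t : k) :
    (dehomogenize b).eval t = eval (Fin.cons 1 fun _ => t) b := by
  rw [dehomogenize, ← Polynomial.coe_aeval_eq_eval, comp_aeval_apply, ← aeval_eq_eval]
  congr 2
  funext i
  cases i using Fin.cases <;> simp

theorem dehomogenize_ne_zero [Infinite k] {b : MvPolynomial (Fin 2) k} {d : ℕ}
    (hb : b.IsHomogeneous d) (h0 : b ≠ 0) : dehomogenize b ≠ 0 := by
  refine fun hzero => h0 (eq_zero_of_forall_affinePoint_mem_zeros hb fun v => ?_)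
  have hv : v = fun _ => v 0 := funext fun i => by rw [Fin.eq_zero i]
  rw [affinePoint_mem_zeros_iff hb, hv, ← eval_dehomogenize, hzero, Polynomial.eval_zero]

theorem eventually_linePoint_notMem_zeros [Infinite k] {b : MvPolynomial (Fin 2) k} {d : ℕ}
    (hb : b.IsHomogeneous d) (h0 : b ≠ 0) : ∀ᶠ t in cofinite, linePoint t ∉ zeros k b := by
  filter_upwards [eventually_polynomial_eval_ne_zero (dehomogenize_ne_zero hb h0)] with t ht
  rwa [linePoint, affinePoint_mem_zeros_iff hb, ← eval_dehomogenize]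

theorem RatMap.exists_ratFunc_app_linePoint [Infinite k] (G : RatMap k 1 n) (hG : G.comp 0 ≠ 0) :
    ∃ c : Fin n → RatFunc k, ∀ᶠ t in cofinite, G.Defined (linePoint t) ∧
      G.app (linePoint t) = affinePoint fun i => (c i).eval (RingHom.id k) t := by
  have hden := dehomogenize_ne_zero (G.homog 0) hG
  refine ⟨fun i => algebraMap _ _ (dehomogenize (G.comp i.succ)) /
    algebraMap _ _ (dehomogenize (G.comp 0)), ?_⟩
  filter_upwards [eventually_polynomial_eval_ne_zero hden,
    eventually_all.2 fun i => eventually_ratFunc_eval_div (dehomogenize (G.comp (Fin.succ i))) hden]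
    with t ht hc
  rw [eval_dehomogenize] at ht
  have hne : G.evalVec (Fin.cons 1 fun _ => t) ≠ 0 := Function.ne_iff.2 ⟨0, ht⟩
  refine ⟨(G.defined_mk_iff _).2 hne, ?_⟩
  rw [linePoint, affinePoint, G.app_mk _ hne, mk_eq_affinePoint hne ht]
  simp only [hc, eval_dehomogenize]
  rfl

theorem RatMap.eval_comp_of_app_eq_linePoint {F : RatMap k n 1} {w : Fin n → k} {t : k}
    (hF : F.Defined (affinePoint w)) (ht : F.app (affinePoint w) = linePoint t) :
    eval (Fin.cons 1 w) (F.comp 0) ≠ 0 ∧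
      eval (Fin.cons 1 w) (F.comp 1) = t * eval (Fin.cons 1 w) (F.comp 0) := by
  rw [affinePoint, RatMap.defined_mk_iff] at hF
  rw [affinePoint, RatMap.app_mk _ _ hF, linePoint, affinePoint,
    Projectivization.mk_eq_mk_iff] at ht
  obtain ⟨a, ha⟩ := ht
  have h0 : (a : k) = eval (Fin.cons 1 w) (F.comp 0) := by
    simpa [Units.smul_def, RatMap.evalVec] using congrFun ha 0
  have h1 : (a : k) * t = eval (Fin.cons 1 w) (F.comp 1) := by
    simpa [Units.smul_def, RatMap.evalVec] using congrFun ha 1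
  exact ⟨h0 ▸ a.ne_zero, by rw [← h0, ← h1, mul_comm]⟩

/-- The point `[1 : 0 : v]` of the hyperplane `X 1 = 0`. -/
def sectionPoint (v : Fin n → k) : ProjSp k (n + 1) :=
  affinePoint (Fin.cons 0 v)

/-- The restriction of a form to the points `[1 : 0 : v]`. -/
noncomputable def restrictToSection (p : MvPolynomial (Fin (n + 2)) k) : MvPolynomial (Fin n) k :=
  aeval (Fin.cons 1 (Fin.cons 0 X)) p

theorem eval_restrictToSection (p : MvPolynomial (Fin (n + 2)) k) (v : Fin n → k) :
    eval v (restrictToSection p) = eval (Fin.cons 1 (Fin.cons 0 v)) p := by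
  rw [restrictToSection, eval_aeval]
  congr 2
  funext i
  cases i using Fin.cases with
  | zero => simp
  | succ i => cases i using Fin.cases <;> simp

theorem sectionPoint_mem_zeros_iff {p : MvPolynomial (Fin (n + 2)) k} {d : ℕ}
    (hp : p.IsHomogeneous d) (v : Fin n → k) :
    sectionPoint v ∈ zeros k p ↔ eval v (restrictToSection p) = 0 := by
  rw [sectionPoint, affinePoint_mem_zeros_iff hp, eval_restrictToSection]

/-- The equation of the cylinder over `p = 0`. -/
noncomputable def cylinderEquation (p : MvPolynomial (Fin n) k) : MvPolynomial (Fin (n + 2)) k :=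
  homogenization (rename Fin.succ p).totalDegree (rename Fin.succ p)

theorem isHomogeneous_cylinderEquation (p : MvPolynomial (Fin n) k) :
    (cylinderEquation p).IsHomogeneous (rename Fin.succ p : MvPolynomial _ k).totalDegree :=
  isHomogeneous_homogenization le_rfl

theorem affinePoint_mem_zeros_cylinderEquation (p : MvPolynomial (Fin n) k)
    (v : Fin (n + 1) → k) :
    affinePoint v ∈ zeros k (cylinderEquation p) ↔ eval (fun i => v i.succ) p = 0 := by
  rw [cylinderEquation, affinePoint_mem_zeros_homogenization le_rfl, eval_rename]
  rfl

theorem restrictToSection_cylinderEquation (p : MvPolynomial (Fin n) k) :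
    restrictToSection (cylinderEquation p) = p := by
  rw [restrictToSection, cylinderEquation, aeval_cons_one_homogenization le_rfl, aeval_rename]
  exact aeval_X_left_apply p

section Curves

variable {C : Set (ProjSp k (n + 1))} {f : MvPolynomial (Fin n) k} {F : RatMap k (n + 1) 1}
  {G : RatMap k 1 (n + 1)} {u : MvPolynomial (Fin (n + 2)) k} {v : MvPolynomial (Fin 2) k}
  {du dv : ℕ} {c : Fin n → RatFunc k}

theorem exists_ratFunc_sectionPoint [Infinite k]
    (hC : C ⊆ zeros k (X 1)) (hv : v.IsHomogeneous dv) (hv0 : v ≠ 0) (hG0 : G.comp 0 ≠ 0)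
    (hG : F.InvertsOn G (Set.univ \ zeros k v) C) :
    ∃ c : Fin n → RatFunc k, ∀ᶠ t in cofinite, G.Defined (linePoint t) ∧
      G.app (linePoint t) = sectionPoint fun i => (c i).eval (RingHom.id k) t := by
  obtain ⟨c, hc⟩ := G.exists_ratFunc_app_linePoint hG0
  refine ⟨fun i => c i.succ, ?_⟩
  filter_upwards [hc, eventually_linePoint_notMem_zeros hv hv0] with t ⟨hdef, happ⟩ ht
  have hmem := hC (hG _ ⟨Set.mem_univ _, ht⟩).2.1
  rw [happ, affinePoint_mem_zeros_iff (isHomogeneous_X _ _), eval_X] at hmem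
  refine ⟨hdef, ?_⟩
  rw [happ, sectionPoint]
  congr 1
  funext i
  cases i using Fin.cases with
  | zero => exact hmem
  | succ i => rfl

theorem exists_parameter_of_app_sectionPoint [Infinite k]
    (hF : ∀ᶠ t in cofinite, F.Defined (sectionPoint fun i => (c i).eval (RingHom.id k) t) ∧
      F.app (sectionPoint fun i => (c i).eval (RingHom.id k) t) = linePoint t) :
    ∃ p q : MvPolynomial (Fin n) k, aeval c q ≠ 0 ∧ aeval c p = RatFunc.X * aeval c q := by
  set p := restrictToSection (F.comp 1)
  set q := restrictToSection (F.comp 0)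
  have hpq : ∀ᶠ t in cofinite, (aeval c q).eval (RingHom.id k) t ≠ 0 ∧
      (aeval c p).eval (RingHom.id k) t = t * (aeval c q).eval (RingHom.id k) t := by
    filter_upwards [hF, eventually_ratFunc_eval_aeval c p, eventually_ratFunc_eval_aeval c q]
      with t ht hp hq
    rw [hp, hq, eval_restrictToSection, eval_restrictToSection]
    exact RatMap.eval_comp_of_app_eq_linePoint ht.1 ht.2
  refine ⟨p, q, fun h => ?_, ?_⟩
  · obtain ⟨t, ht⟩ := hpq.exists
    simp [h] at ht
  · refine ratFunc_eq_of_eventually_eval_eq ?_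
    filter_upwards [hpq, eventually_ratFunc_eval_mul RatFunc.X (aeval c q)] with t ht hmul
    rw [ht.2, hmul, RatFunc.eval_X]

theorem dvd_of_aeval_eq_zero [IsAlgClosed k] (hf : Prime f)
    (hC : ∀ a, sectionPoint a ∈ C ↔ eval a f = 0) (hu : u.IsHomogeneous du)
    (hCu : ∃ a, sectionPoint a ∈ C \ zeros k u)
    (hF : G.InvertsOn F (C \ zeros k u) Set.univ)
    (hc : ∀ᶠ t in cofinite, G.Defined (linePoint t) ∧
      G.app (linePoint t) = sectionPoint fun i => (c i).eval (RingHom.id k) t)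
    {p : MvPolynomial (Fin n) k} (hp : aeval c p = 0) : f ∣ p := by
  have : Infinite k := IsAlgClosed.instInfinite
  set P := cylinderEquation p
  have hPhom : P.IsHomogeneous _ := isHomogeneous_cylinderEquation p
  have hP (a) : sectionPoint a ∈ zeros k P ↔ eval a p = 0 :=
    affinePoint_mem_zeros_cylinderEquation p (Fin.cons 0 a)
  have hpullback : aeval G.comp P = 0 := by
    by_contra hne
    obtain ⟨t, ht, hpt, hdef, happ⟩ := ((eventually_linePoint_notMem_zeros
      (hPhom.aeval G.comp G.homog) hne).and ((eventually_ratFunc_eval_aeval c p).and hc)).exists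
    rw [hp, RatFunc.eval_zero] at hpt
    rw [← RatMap.app_mem_zeros_iff hPhom hdef, happ, hP] at ht
    exact ht hpt.symm
  have hdvd : f ∣ p * restrictToSection u := dvd_of_forall_eval_eq_zero hf fun a ha => by
    rw [map_mul, mul_eq_zero, ← hP, ← sectionPoint_mem_zeros_iff hu, or_iff_not_imp_right]
    intro hau
    obtain ⟨-, -, hdef, hinv⟩ := hF _ ⟨(hC a).2 ha, hau⟩
    rw [← hinv, RatMap.app_mem_zeros_iff hPhom hdef, hpullback, zeros_zero]
    exact Set.mem_univ _
  refine (hf.dvd_or_dvd hdvd).resolve_right fun hfu => ?_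
  obtain ⟨a, ha, hau⟩ := hCu
  rw [sectionPoint_mem_zeros_iff hu] at hau
  obtain ⟨q, hq⟩ := hfu
  exact hau (by rw [hq, map_mul, (hC a).1 ha, zero_mul])

theorem exists_isProperParametrization [IsAlgClosed k] (hf : Prime f)
    (hCX : C ⊆ zeros k (X 1)) (hC : ∀ a, sectionPoint a ∈ C ↔ eval a f = 0)
    (hu : u.IsHomogeneous du) (hCu : ∃ a, sectionPoint a ∈ C \ zeros k u)
    (hv : v.IsHomogeneous dv) (hv0 : ¬ Set.univ ⊆ zeros k v)
    (hF : G.InvertsOn F (C \ zeros k u) Set.univ)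
    (hG : F.InvertsOn G (Set.univ \ zeros k v) C) :
    ∃ c : Fin n → RatFunc k, IsProperParametrization c f := by
  have : Infinite k := IsAlgClosed.instInfinite
  have hv0' : v ≠ 0 := fun h => hv0 (by rw [h, zeros_zero])
  have hG0 : G.comp 0 ≠ 0 := by
    intro h
    obtain ⟨a, ha⟩ := hCu
    obtain ⟨-, -, hdef, hinv⟩ := hF _ ha
    apply affinePoint_notMem_zeros_X_zero (Fin.cons 0 a)
    rw [← sectionPoint, ← hinv, RatMap.app_mem_zeros_iff (isHomogeneous_X k 0) hdef, aeval_X, h,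
      zeros_zero]
    exact Set.mem_univ _
  obtain ⟨c, hc⟩ := exists_ratFunc_sectionPoint hCX hv hv0' hG0 hG
  have hinv : ∀ᶠ t in cofinite, sectionPoint (fun i => (c i).eval (RingHom.id k) t) ∈ C ∧
      F.Defined (sectionPoint fun i => (c i).eval (RingHom.id k) t) ∧
      F.app (sectionPoint fun i => (c i).eval (RingHom.id k) t) = linePoint t := by
    filter_upwards [hc, eventually_linePoint_notMem_zeros hv hv0'] with t ⟨_, happ⟩ ht
    rw [← happ]
    exact (hG _ ⟨Set.mem_univ _, ht⟩).2
  have hfc : aeval c f = 0 := ratFunc_eq_of_eventually_eval_eq (by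
    filter_upwards [hinv, eventually_ratFunc_eval_aeval c f] with t ht hft
    rw [hft, RatFunc.eval_zero, (hC _).1 ht.1])
  refine ⟨c, fun p => ⟨dvd_of_aeval_eq_zero hf hC hu hCu hF hc, ?_⟩,
    exists_parameter_of_app_sectionPoint (hinv.mono fun t ht => ht.2)⟩
  rintro ⟨q, rfl⟩
  rw [map_mul, hfc, zero_mul]

end Curves

end Parametrizations

section BlowUp

variable {O κ : Type*} [CommRing O] [Algebra k O] [Field κ]
  [Algebra k κ] [Algebra (RatFunc k) κ] {ρ : O →ₐ[k] κ}
  {c : Fin n → RatFunc k} {a D : Fin n → O} {ε z w : O} {f p q : MvPolynomial (Fin n) k}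
  {η : RatFunc k →ₐ[k] O}

theorem map_aeval_eq_algebraMap [IsScalarTower k (RatFunc k) κ]
    (ha : ∀ i, ρ (a i) = algebraMap (RatFunc k) κ (c i)) (p : MvPolynomial (Fin n) k) :
    ρ (aeval a p) = algebraMap (RatFunc k) κ (aeval c p) := by
  rw [comp_aeval_apply, funext ha]
  exact aeval_algebraMap_apply κ c p

theorem exists_lifted_parameter [IsScalarTower k (RatFunc k) κ] [IsLocalHom ρ]
    (ha : ∀ i, ρ (a i) = algebraMap (RatFunc k) κ (c i)) (hε : ρ ε = 0) (hq : aeval c q ≠ 0)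
    (hpq : aeval c p = RatFunc.X * aeval c q) (z : O) :
    ∃ w, w * aeval a q = z * ε * aeval a q + aeval a p ∧
      ρ w = algebraMap (RatFunc k) κ RatFunc.X := by
  have hq' : ρ (aeval a q) ≠ 0 := by rwa [map_aeval_eq_algebraMap ha, map_ne_zero]
  obtain ⟨s, hs⟩ := (isUnit_of_map_unit ρ _ (isUnit_iff_ne_zero.2 hq')).exists_right_inv
  have hw : (z * ε + aeval a p * s) * aeval a q = z * ε * aeval a q + aeval a p := by
    linear_combination aeval a p * hs
  refine ⟨_, hw, mul_right_cancel₀ hq' ?_⟩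
  rw [← map_mul, hw, map_add, map_mul, map_mul, hε, map_aeval_eq_algebraMap ha,
    map_aeval_eq_algebraMap ha, hpq, map_mul]
  ring

theorem exists_difference_quotient (hη : ∀ e, ρ (η e) = algebraMap (RatFunc k) κ e)
    (hε : ρ ε = 0) (hD : ∀ i, a i = η (c i) + ε * D i) (p : MvPolynomial (Fin n) k) :
    ∃ δ, aeval a p = η (aeval c p) + ε * δ ∧
      ρ δ = ∑ i, algebraMap (RatFunc k) κ (aeval c (pderiv i p)) * ρ (D i) := by
  obtain ⟨r, hr⟩ := exists_aeval_add_mul_eq (fun i => η (c i)) D ε p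
  refine ⟨∑ i, η (aeval c (pderiv i p)) * D i + ε * r, ?_, ?_⟩
  · rw [funext hD, hr]
    simp only [← comp_aeval_apply]
    ring
  · simp [hε, hη]

/-- Both relations are Taylor expansions to first order along `aeval a f = 0`: the first one of `f`,
the second one of `p - t q` with `t` the parameter. -/
theorem residue_relations [IsDomain O] (hη : ∀ e, ρ (η e) = algebraMap (RatFunc k) κ e)
    (hε : ρ (aeval a f) = 0) (hε0 : aeval a f ≠ 0) (hD : ∀ i, a i = η (c i) + aeval a f * D i)
    (hf : aeval c f = 0) (hpq : aeval c p = RatFunc.X * aeval c q)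
    (hw : η RatFunc.X * aeval a q = z * aeval a f * aeval a q + aeval a p) :
    1 = ∑ i, algebraMap (RatFunc k) κ (aeval c (pderiv i f)) * ρ (D i) ∧
    algebraMap (RatFunc k) κ (aeval c q) * ρ z = ∑ i, algebraMap (RatFunc k) κ
      (RatFunc.X * aeval c (pderiv i q) - aeval c (pderiv i p)) * ρ (D i) := by
  obtain ⟨δf, hf₁, hf₂⟩ := exists_difference_quotient hη hε hD f
  obtain ⟨δp, hp₁, hp₂⟩ := exists_difference_quotient hη hε hD p
  obtain ⟨δq, hq₁, hq₂⟩ := exists_difference_quotient hη hε hD q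
  constructor
  · rw [hf, map_zero, zero_add] at hf₁
    rw [← hf₂, ← mul_left_cancel₀ hε0 ((mul_one _).trans hf₁), map_one]
  · have hz : η RatFunc.X * δq = z * aeval a q + δp := by
      refine mul_left_cancel₀ hε0 ?_
      have hηp : η (aeval c p) = η RatFunc.X * η (aeval c q) := by rw [hpq, map_mul]
      linear_combination hw + hp₁ + hηp - η RatFunc.X * hq₁
    have hqρ : ρ (aeval a q) = algebraMap (RatFunc k) κ (aeval c q) := by
      rw [hq₁, map_add, map_mul, hε, hη, zero_mul, add_zero]
    have hρ := congrArg ρ hz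
    simp only [map_add, map_mul, hη, hqρ, hp₂, hq₂] at hρ
    simp only [map_sub, map_mul, sub_mul, Finset.sum_sub_distrib, mul_assoc, ← Finset.mul_sum]
    linear_combination -hρ

theorem coords_mem_of_blowUp_coords_mem {L : Type*} [Field L] [Algebra k L]
    {E : IntermediateField k L} {j : O →ₐ[k] L} (hj : Function.Injective j)
    {f p q : MvPolynomial (Fin 2) k} {c : Fin 2 → RatFunc k} {a D : Fin 2 → O} {s : O}
    (hf : aeval a f ≠ 0) (hq : aeval a q ≠ 0) (hD : ∀ i, a i = η (c i) + aeval a f * D i)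
    (hw : η RatFunc.X * aeval a q = z * aeval a f * aeval a q + aeval a p) (hs : D 1 * s = 1)
    (hE : ∀ i, j (![aeval a f * D 1, D 0 * s, η RatFunc.X] i) ∈ E) :
    j z ∈ E ∧ ∀ i, j (a i) ∈ E := by
  have hη (e) : j (η e) ∈ E :=
    IntermediateField.adjoin_le_iff.2 (Set.singleton_subset_iff.2 (hE 2))
      (algHom_ratFunc_mem_adjoin (j.comp η) e)
  have ha1 : j (a 1) ∈ E := by
    rw [hD 1, map_add]
    exact add_mem (hη _) (hE 0)
  have ha0 : j (a 0) ∈ E := by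
    have h : a 0 = η (c 0) + D 0 * s * (aeval a f * D 1) := by
      linear_combination hD 0 - aeval a f * D 0 * hs
    rw [h, map_add, map_mul]
    exact add_mem (hη _) (mul_mem (hE 1) (hE 0))
  have ha : ∀ i, j (a i) ∈ E := Fin.forall_fin_two.2 ⟨ha0, ha1⟩
  have haE (p : MvPolynomial (Fin 2) k) : j (aeval a p) ∈ E := by
    rw [comp_aeval_apply]
    exact aeval_mem E.toSubalgebra ha p
  have hz : j z = (j (η RatFunc.X) * j (aeval a q) - j (aeval a p)) /
      (j (aeval a f) * j (aeval a q)) := by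
    rw [eq_div_iff (mul_ne_zero ((map_ne_zero_iff j hj).2 hf) ((map_ne_zero_iff j hj).2 hq)),
      ← map_mul j, ← map_mul j, ← map_mul j, ← map_sub j]
    exact congrArg j (by linear_combination -hw)
  refine ⟨?_, ha⟩
  rw [hz]
  exact E.div_mem (sub_mem (mul_mem (hη _) (haE q)) (haE p)) (mul_mem (haE f) (haE q))

theorem residue_blowUp_coords {D : Fin 2 → O} {s : O}
    (hη : ∀ e, ρ (η e) = algebraMap (RatFunc k) κ e) (hε : ρ ε = 0) (hs : D 1 * s = 1) :
    (fun i => ρ ((![ε * D 1, D 0 * s, η RatFunc.X] : Fin 3 → O) i)) =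
      Fin.cons 0 (Fin.cons (ρ (D 0) / ρ (D 1))
        fun _ : Fin 1 => algebraMap (RatFunc k) κ RatFunc.X) := by
  have hρs : ρ s = (ρ (D 1))⁻¹ := eq_inv_of_mul_eq_one_right (by rw [← map_mul, hs, map_one])
  funext i
  match i with
  | 0 => simp [hε]
  | 1 => simp [hρs, div_eq_mul_inv]
  | 2 => exact hη RatFunc.X

theorem IsDivisorChart.exists_blowUp [IsDomain O] [IsScalarTower k (RatFunc k) κ] [IsLocalHom ρ]
    {f : MvPolynomial (Fin 2) k} {c : Fin 2 → RatFunc k} {x : Fin 3 → O}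
    (hx : IsDivisorChart ρ x (rename Fin.succ f)) (hf : f ≠ 0) (hc : IsProperParametrization c f)
    (hz : Transcendental (RatFunc k) (ρ (x 0)))
    (hxc : ∀ i, ρ (x (Fin.succ i)) = algebraMap (RatFunc k) κ (c i)) :
    ∃ y : Fin 3 → O, IsDivisorChart ρ y (X 0) := by
  set a : Fin 2 → O := fun i => x i.succ
  set ε := aeval a f
  have hfc : aeval c f = 0 := (hc.aeval_eq_zero_iff f).2 dvd_rfl
  have hε : ρ ε = 0 := by rw [map_aeval_eq_algebraMap hxc, hfc, map_zero]
  have hε0 : ε ≠ 0 := fun h => hf <| rename_injective _ (Fin.succ_injective 2) <|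
    hx.injective (by rw [aeval_rename, map_zero]; exact h)
  obtain ⟨p, q, hq, hpq⟩ := hc.exists_parameter
  obtain ⟨w, hw, hρw⟩ := exists_lifted_parameter hxc hε hq hpq (x 0)
  obtain ⟨η, rfl, hη⟩ := exists_algHom_ratFunc ρ hρw
  have hdvd (i : Fin 2) : ∃ D, a i = η (c i) + ε * D := by
    obtain ⟨D, hD⟩ := hx.exists_eq_mul (o := a i - η (c i)) (by rw [map_sub, hη, hxc, sub_self])
    rw [aeval_rename] at hD
    exact ⟨D, by rw [← sub_eq_iff_eq_add', hD]; rfl⟩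
  choose D hD using hdvd
  obtain ⟨h₁, h₂⟩ := residue_relations hη hε hε0 hD hfc hpq hw
  obtain ⟨hD1, htr⟩ := transcendental_div_of_linear_relations hz hq h₁ h₂
  obtain ⟨s, hs⟩ := (isUnit_of_map_unit ρ _ (isUnit_iff_ne_zero.2 hD1)).exists_right_inv
  refine ⟨![ε * D 1, D 0 * s, η RatFunc.X], hx.change_coords X_prime (fun r => ?_) ?_ ?_⟩
  · rw [comp_aeval_apply, residue_blowUp_coords hη hε hs]
    exact aeval_cons_zero_eq_zero_iff (algebraicIndependent_cons_algebraMap htr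
      (algebraicIndependent_unique_type_iff.2 RatFunc.transcendental_X)) r
  · rw [aeval_X]
    exact mul_ne_zero hε0 (left_ne_zero_of_mul_eq_one hs)
  · have hq0 : aeval a q ≠ 0 := fun h => hq <| (map_eq_zero (algebraMap (RatFunc k) κ)).1 <| by
      rw [← map_aeval_eq_algebraMap hxc, h, map_zero]
    obtain ⟨hz, ha⟩ := coords_mem_of_blowUp_coords_mem
      (j := IsScalarTower.toAlgHom k O (FractionRing O)) (IsFractionRing.injective O _)
      hε0 hq0 hD hw hs fun i => IntermediateField.subset_adjoin k _ (Set.mem_range_self i)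
    exact Fin.cases hz ha

end BlowUp

theorem IsProperParametrization.cremonaEquivalent [IsAlgClosed k] {c : Fin 2 → RatFunc k}
    {f : MvPolynomial (Fin 2) k} (hc : IsProperParametrization c f) (hf : Prime f)
    {S : Set (ProjSp k 3)}
    (hS : ∀ v : Fin 3 → k, affinePoint v ∈ S ↔ eval (fun i => v i.succ) f = 0) :
    CremonaEquivalent k S (zeros k (X 1)) := by
  let Z : RatFunc (RatFunc k) := RatFunc.X
  obtain ⟨O, _, _, _, ρ, x, hx, _, hρx⟩ := exists_isDivisorChart
    (aeval_cons_eq_zero_iff_rename_succ_dvd (z := Z) RatFunc.transcendental_X hc.aeval_eq_zero_iff)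
  obtain ⟨y, hy⟩ := hx.exists_blowUp hf.ne_zero hc
    (by rw [hρx]; exact RatFunc.transcendental_X) fun i => hρx i.succ
  refine cremonaEquivalent_of_isDivisorChart (prime_rename_succ hf) X_prime hx hy (fun v => ?_)
    fun v => ?_
  · rw [hS, eval_rename]
    rfl
  · rw [affinePoint_mem_zeros_iff (isHomogeneous_X _ _), eval_X, eval_X]
    rfl

section Cones

/-- The point at infinity `[0 : 1 : 0 : … : 0]`. The lines through it are parallel to the first
affine coordinate axis, so a cone with this vertex is a cylinder in the affine chart. -/
def verticalPoint (k : Type) [Field k] (n : ℕ) : ProjSp k (n + 1) :=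
  Projectivization.mk k (Pi.single 1 1) (Pi.single_ne_zero_iff.2 one_ne_zero)

theorem IsConeWithVertex.affinePoint_mem {S : Set (ProjSp k (n + 1))}
    (hS : IsConeWithVertex k S (verticalPoint k n)) {v w : Fin (n + 1) → k}
    (hvw : ∀ i : Fin n, v i.succ = w i.succ) (hv : affinePoint v ∈ S) : affinePoint w ∈ S := by
  refine hS.2 _ hv ?_
  simp only [lineThrough, Set.mem_ofPred_eq, verticalPoint, affinePoint,
    Projectivization.submodule_mk, Submodule.span_singleton_le_iff_mem, Submodule.mem_sup,
    Submodule.mem_span_singleton]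
  refine ⟨_, ⟨w 0 - v 0, rfl⟩, _, ⟨1, rfl⟩, funext fun i => ?_⟩
  cases i using Fin.cases with
  | zero => simp
  | succ i =>
    cases i using Fin.cases with
    | zero => simp
    | succ i => simp [hvw, Fin.ext_iff]

theorem IsConeWithVertex.affinePoint_mem_iff_sectionPoint_mem {S : Set (ProjSp k (n + 1))}
    (hS : IsConeWithVertex k S (verticalPoint k n)) (v : Fin (n + 1) → k) :
    affinePoint v ∈ S ↔ sectionPoint (fun i => v i.succ) ∈ S :=
  ⟨hS.affinePoint_mem fun _ => rfl, hS.affinePoint_mem fun _ => rfl⟩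

theorem restrictToSection_dvd_of_dvd {f p : MvPolynomial (Fin (n + 2)) k} (h : f ∣ p) :
    restrictToSection f ∣ restrictToSection p :=
  map_dvd (aeval _) h

theorem prime_restrictToSection [IsAlgClosed k] {d : ℕ} {f : MvPolynomial (Fin (n + 2)) k}
    (hf : f.IsHomogeneous d) (hprime : Prime f)
    (hcone : IsConeWithVertex k (zeros k f) (verticalPoint k n))
    (hne : ∃ v, affinePoint v ∈ zeros k f) : Prime (restrictToSection f) := by
  have : Infinite k := IsAlgClosed.instInfinite
  have hmem (v) : affinePoint v ∈ zeros k f ↔ eval (fun i => v i.succ) (restrictToSection f) = 0 :=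
    (hcone.affinePoint_mem_iff_sectionPoint_mem v).trans (sectionPoint_mem_zeros_iff hf _)
  obtain ⟨v, hv⟩ := hne
  have hX : ¬ f ∣ X 0 := by
    rintro ⟨q, hq⟩
    refine affinePoint_notMem_zeros_X_zero v ?_
    rw [hq, zeros_mul]
    exact Or.inl hv
  refine ⟨fun h0 => hprime.ne_zero (eq_zero_of_forall_affinePoint_mem_zeros hf fun w => ?_),
    fun hunit => ?_, fun a b hab => ?_⟩
  · rw [hmem, h0, map_zero]
  · have := hunit.map (eval fun i => v i.succ)
    rw [(hmem v).1 hv] at this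
    exact not_isUnit_zero this
  have hdvd : f ∣ X 0 * (cylinderEquation a * cylinderEquation b) := by
    refine dvd_X_zero_mul_of_forall_affinePoint hf hprime
      ((isHomogeneous_cylinderEquation a).mul (isHomogeneous_cylinderEquation b)) fun w hw => ?_
    obtain ⟨q, hq⟩ := hab
    rw [zeros_mul, Set.mem_union, affinePoint_mem_zeros_cylinderEquation,
      affinePoint_mem_zeros_cylinderEquation, ← mul_eq_zero, ← map_mul, hq, map_mul,
      (hmem w).1 hw, zero_mul]
  obtain h | h := hprime.dvd_or_dvd ((hprime.dvd_or_dvd hdvd).resolve_left hX)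
  · exact .inl (by simpa only [restrictToSection_cylinderEquation] using
      restrictToSection_dvd_of_dvd h)
  · exact .inr (by simpa only [restrictToSection_cylinderEquation] using
      restrictToSection_dvd_of_dvd h)

theorem IsConeWithVertex.exists_prime_cylinder_equation [IsAlgClosed k]
    {S : Set (ProjSp k (n + 1))} (hcone : IsConeWithVertex k S (verticalPoint k n))
    (hS : IsIrredDivisor k S) (hne : ∃ v, affinePoint v ∈ S) :
    ∃ f : MvPolynomial (Fin n) k, Prime f ∧
      ∀ v : Fin (n + 1) → k, affinePoint v ∈ S ↔ eval (fun i => v i.succ) f = 0 := by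
  obtain ⟨d, φ, -, hφ, hirr, rfl⟩ := hS
  exact ⟨_, prime_restrictToSection hφ hirr.prime hcone hne, fun v =>
    (hcone.affinePoint_mem_iff_sectionPoint_mem v).trans (sectionPoint_mem_zeros_iff hφ _)⟩

end Cones

section StandardPosition

theorem exists_dual_of_isHomogeneous_one {h : MvPolynomial (Fin n) k} (hh : h.IsHomogeneous 1) :
    ∃ l : Module.Dual k (Fin n → k), ∀ v, l v = eval v h := by
  have hle : homogeneousSubmodule (Fin n) k 1 ≤
      (LinearMap.range (LinearMap.ltoFun k (Fin n → k) k k)).comap (evalₗ k (Fin n)) := by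
    rw [homogeneousSubmodule_one_eq_span_X, Submodule.span_le]
    rintro _ ⟨i, rfl⟩
    exact ⟨LinearMap.proj i, by ext v; simp [evalₗ_apply]⟩
  obtain ⟨l, hl⟩ := hle hh
  exact ⟨l, congrFun hl⟩

theorem IsHyperplane.exists_dual {H : Set (ProjSp k n)} (hH : IsHyperplane k H) :
    ∃ l : Module.Dual k (Fin (n + 1) → k),
      ∀ v (hv : v ≠ 0), Projectivization.mk k v hv ∈ H ↔ l v = 0 := by
  obtain ⟨h, -, hh, rfl⟩ := hH
  obtain ⟨l, hl⟩ := exists_dual_of_isHomogeneous_one hh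
  exact ⟨l, fun v hv => by rw [mk_mem_zeros_iff hh hv, hl]⟩

theorem IsHyperplane.smul {H : Set (ProjSp k n)} (hH : IsHyperplane k H) (g : LinAut k n) :
    IsHyperplane k (g • H) := by
  obtain ⟨h, h0, hh, rfl⟩ := hH
  exact ⟨substLinear g h, (map_ne_zero_iff _ (substLinear g).injective).2 h0,
    isHomogeneous_substLinear g hh, smul_zeros g hh⟩

theorem exists_transvection_smul_eq_zeros {H : Set (ProjSp k (n + 1))} (hH : IsHyperplane k H)
    (hp : verticalPoint k n ∉ H) (hb : sectionPoint 0 ∈ H) :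
    ∃ t : LinAut k (n + 1), t • verticalPoint k n = verticalPoint k n ∧ t • H = zeros k (X 1) ∧
      t • (sectionPoint 0 : ProjSp k (n + 1)) = sectionPoint 0 := by
  obtain ⟨l, hl⟩ := hH.exists_dual
  set e : Fin (n + 2) → k := Pi.single 1 1
  have hle : l e ≠ 0 := mt (hl _ _).2 hp
  have hlb : l (Fin.cons 1 (Fin.cons 0 0)) = 0 := (hl _ _).1 hb
  have hf : ((l e)⁻¹ • l - LinearMap.proj 1 : Module.Dual k (Fin (n + 2) → k)) e = 0 := by
    simp [e, hle]
  refine ⟨LinearEquiv.transvection hf, ?_, ?_, ?_⟩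
  · simp only [verticalPoint, Projectivization.smul_mk, LinearEquiv.smul_def,
      LinearEquiv.transvection.apply]
    congr 1
    rw [hf, zero_smul, add_zero]
  · ext x
    obtain ⟨x, rfl⟩ := MulAction.surjective (LinearEquiv.transvection hf) x
    beta_reduce
    rw [Set.smul_mem_smul_set_iff]
    induction x using Projectivization.ind with
    | h v hv =>
      rw [hl, Projectivization.smul_mk, mk_mem_zeros_iff (isHomogeneous_X _ _), eval_X,
        LinearEquiv.smul_def, LinearEquiv.transvection.apply]
      simp [e, hle]
  · simp only [sectionPoint, affinePoint, Projectivization.smul_mk, LinearEquiv.smul_def,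
      LinearEquiv.transvection.apply]
    congr 1
    simp [hlb]

theorem verticalPoint_ne_affinePoint (v : Fin (n + 1) → k) : verticalPoint k n ≠ affinePoint v := by
  intro h
  apply affinePoint_notMem_zeros_X_zero v
  rw [← h, verticalPoint, mk_mem_zeros_iff (isHomogeneous_X _ _)]
  simp

theorem exists_linAut_standard_position {H : Set (ProjSp k (n + 1))} {p b : ProjSp k (n + 1)}
    (hH : IsHyperplane k H) (hp : p ∉ H) (hb : b ∈ H) :
    ∃ g : LinAut k (n + 1), g • p = verticalPoint k n ∧ g • H = zeros k (X 1) ∧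
      g • b = sectionPoint 0 := by
  obtain ⟨g, hgp, hgb⟩ := MulAction.is_two_pretransitive_iff.1
    (Projectivization.linearEquiv_is_two_pretransitive k (Fin (n + 2) → k))
    (ne_of_mem_of_not_mem hb hp).symm (verticalPoint_ne_affinePoint (Fin.cons 0 0))
  obtain ⟨t, htp, htH, htb⟩ := exists_transvection_smul_eq_zeros (hH.smul g)
    (by rwa [← hgp, Set.smul_mem_smul_set_iff])
    (by rw [sectionPoint, ← hgb]; exact Set.smul_mem_smul_set hb)
  refine ⟨t * g, ?_, ?_, ?_⟩
  · rw [mul_smul, hgp, htp]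
  · rw [mul_smul, htH]
  · rw [mul_smul, hgb, ← sectionPoint, htb]

end StandardPosition

end ProjSp

theorem rational_cone_in_P3_cremonaEquivalent_to_plane_general
    (k : Type) [Field k] [IsAlgClosed k]
    (S : Set (ProjSp k 3)) (p : ProjSp k 3) (H : Set (ProjSp k 3))
    (hS : IsIrredDivisor k S) (hcone : IsConeWithVertex k S p)
    (hH : IsHyperplane k H) (hp : p ∉ H)
    (hrat : Birational k (S ∩ H) (Set.univ : Set (ProjSp k 1))) :
    ∃ H' : Set (ProjSp k 3), IsHyperplane k H' ∧ CremonaEquivalent k S H' := by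
  refine ⟨zeros k (X 1), ⟨X 1, X_ne_zero _, isHomogeneous_X _ _, rfl⟩, ?_⟩
  obtain ⟨F, G, u, v, du, dv, hu, hv, hAu, hBv, hF, hG⟩ := hrat
  obtain ⟨b, hb, hbu⟩ := Set.not_subset.1 hAu
  obtain ⟨g, hgp, hgH, hgb⟩ := exists_linAut_standard_position hH hp hb.2
  have hbase : sectionPoint 0 ∈ g • (S ∩ H) \ zeros k (substLinear g u) := by
    rw [← hgb, ← smul_zeros g hu, ← Set.smul_set_sdiff]
    exact Set.smul_mem_smul_set ⟨hb, hbu⟩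
  have hsection : g • (S ∩ H) = g • S ∩ zeros k (X 1) := by rw [Set.smul_set_inter, hgH]
  obtain ⟨f, hf, hSf⟩ := (hgp ▸ hcone.smul g).exists_prime_cylinder_equation (hS.smul g)
    ⟨_, (hsection ▸ hbase.1).1⟩
  obtain ⟨c, hc⟩ := exists_isProperParametrization hf (hsection ▸ Set.inter_subset_right)
    (fun a => by
      simp [hsection, sectionPoint, hSf, affinePoint_mem_zeros_iff (isHomogeneous_X k 1)])
    (isHomogeneous_substLinear g hu) ⟨0, hbase⟩ hv hBv
    (by simpa only [smul_zeros g hu, Set.smul_set_sdiff] using RatMap.InvertsOn.smul_source hF g)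
    (RatMap.InvertsOn.smul_target hG g)
  exact (hc.cremonaEquivalent hf hSf).of_smul_left

/-- Corollary `cor:3`, last part.
Every rational cone in `ℙ³` — an irreducible reduced cone whose (general) plane
section `C = S ∩ H` (for a plane `H` missing the vertex; for cones all such
sections are projectively equivalent) is a rational curve, i.e. birational to
`ℙ¹` — is Cremona equivalent to a plane. -/
theorem rational_cone_in_P3_cremonaEquivalent_to_plane
    (k : Type) [Field k] [IsAlgClosed k] [CharZero k]
    (S : Set (ProjSp k 3)) (p : ProjSp k 3) (H : Set (ProjSp k 3))
    (hS : IsIrredDivisor k S) (hcone : IsConeWithVertex k S p)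
    (hH : IsHyperplane k H) (hp : p ∉ H)
    (hrat : Birational k (S ∩ H) (Set.univ : Set (ProjSp k 1))) :
    ∃ H' : Set (ProjSp k 3), IsHyperplane k H' ∧ CremonaEquivalent k S H' :=
  rational_cone_in_P3_cremonaEquivalent_to_plane_general k S p H hS hcone hH hp hrat
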